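/- arXiv:2509.16692 — 2 statements merged into one kernel-verified Lean document; each statement's English description precedes it below -/
import Mathlib

section
/- Let Ω ⊂ ℝ² be a bounded open set, let m : Ω → S¹ be measurable with div m = 0 in the sense of distributions, and assume m ∈ B^{1/(2+α)}_{2+α,∞}(Ω) for some α ∈ (0,1). Then there is a constant C = C(α) > 0 such that (⋁_{Φ ∈ ENT, ‖Φ‖_{C^{1,α}} ≤ 1} |div Φ(m)|)(Ω) ≤ C ‖m‖^{2+α}_{B^{1/(2+α)}_{2+α,∞}(Ω)}, where the supremum of measures is taken over all Φ ∈ ENT with ‖Φ‖_{C^{1,α}} ≤ 1; in particular each such div Φ(m) is a finite Radon measure and the supremum measure is finite. -/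
open MeasureTheory Metric Filter Set Bornology
open scoped ENNReal NNReal Topology Real

noncomputable section

namespace Eikonal

/-! ### Basic geometric objects on `ℝ² ≃ ℂ` -/

/-- The point `e^{iθ}` of the unit circle, viewed as a complex number. -/
def circ (θ : ℝ) : ℂ := Complex.exp (θ * Complex.I)

/-- The real scalar product of `ℝ² ≃ ℂ`. -/
def dotR (z w : ℂ) : ℝ := z.re * w.re + z.im * w.im

/-- Smooth compactly supported test functions in the open set `Ω`. -/
def TestFun (Ω : Set ℂ) (ζ : ℂ → ℝ) : Prop :=
  ContDiff ℝ (⊤ : ℕ∞) ζ ∧ HasCompactSupport ζ ∧ tsupport ζ ⊆ Ω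

/-- `C¹` compactly supported test functions in `Ω`. -/
def TestFun1 (Ω : Set ℂ) (ζ : ℂ → ℝ) : Prop :=
  ContDiff ℝ 1 ζ ∧ HasCompactSupport ζ ∧ tsupport ζ ⊆ Ω

/-- `div m = 0` in the sense of distributions on `Ω`:
`∫_Ω m·∇ζ = 0` for all test functions `ζ`, where `m·∇ζ (x) = Dζ(x)[m x]`. -/
def DivFree (Ω : Set ℂ) (m : ℂ → ℂ) : Prop :=
  ∀ ζ : ℂ → ℝ, TestFun Ω ζ → (∫ x in Ω, fderiv ℝ ζ x (m x)) = 0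

/-- Weak solution of the eikonal equation on `Ω` : `|m| = 1` a.e. and `div m = 0` in `𝒟'(Ω)`. -/
def EikonalSol (Ω : Set ℂ) (m : ℂ → ℂ) : Prop :=
  AEStronglyMeasurable m (volume.restrict Ω) ∧
    (∀ᵐ x ∂(volume.restrict Ω), ‖m x‖ = 1) ∧ DivFree Ω m

/-! ### Besov seminorms (finite–difference characterization), with values in `ℝ≥0∞` -/

/-- The Besov seminorm `|m|_{B^s_{p,∞}(Ω)} = sup_{h ≠ 0} |h|^{-s} ‖m(·+h) - m‖_{L^p(Ω ∩ (Ω-h))}`. -/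
def besovE (Ω : Set ℂ) (p s : ℝ) (m : ℂ → ℂ) : ℝ≥0∞ :=
  ⨆ h : {h : ℂ // h ≠ 0},
    (‖h.1‖₊ : ℝ≥0∞) ^ (-s) *
      (∫⁻ x in Ω ∩ {x | x + h.1 ∈ Ω}, (‖m (x + h.1) - m x‖₊ : ℝ≥0∞) ^ p) ^ (1/p)

/-- The `L^p(Ω)` norm, with values in `ℝ≥0∞`. -/
def LpE (Ω : Set ℂ) (p : ℝ) (m : ℂ → ℂ) : ℝ≥0∞ :=
  (∫⁻ x in Ω, (‖m x‖₊ : ℝ≥0∞) ^ p) ^ (1/p)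

/-- The Besov norm `‖m‖_{B^s_{p,∞}(Ω)} = ‖m‖_{L^p(Ω)} + |m|_{B^s_{p,∞}(Ω)}`. -/
def besovNormE (Ω : Set ℂ) (p s : ℝ) (m : ℂ → ℂ) : ℝ≥0∞ := LpE Ω p m + besovE Ω p s m

/-! ### Entropies -/

/-- `Φ ∈ ENT`, recorded through the angular parametrization `θ ↦ Φ(e^{iθ})` together with its
derivative `φ'` : the derivative exists everywhere, is Lipschitz (i.e. `Φ ∈ C^{1,1}(S¹)`), and
satisfies the entropy condition `(d/dθ) Φ(e^{iθ}) · e^{iθ} = 0`. -/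
def IsEnt (Φ : ℂ → ℂ) (φ' : ℝ → ℂ) : Prop :=
  (∀ θ : ℝ, HasDerivAt (fun t => Φ (circ t)) (φ' θ) θ) ∧
    (∃ L : ℝ≥0, LipschitzWith L φ') ∧
    ∀ θ : ℝ, dotR (φ' θ) (circ θ) = 0

/-- `Φ ∈ ENT` with `‖Φ‖_{C^{1,1}} ≤ 1`. -/
def EntC11Ball (Φ : ℂ → ℂ) : Prop :=
  ∃ φ' : ℝ → ℂ, IsEnt Φ φ' ∧ (∀ θ, ‖Φ (circ θ)‖ ≤ 1) ∧ (∀ θ, ‖φ' θ‖ ≤ 1) ∧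
    LipschitzWith 1 φ'

/-- `Φ ∈ ENT` with `‖Φ‖_{C^{1,α}} ≤ 1`. -/
def EntC1aBall (α : ℝ) (Φ : ℂ → ℂ) : Prop :=
  ∃ φ' : ℝ → ℂ, IsEnt Φ φ' ∧ (∀ θ, ‖Φ (circ θ)‖ ≤ 1) ∧ (∀ θ, ‖φ' θ‖ ≤ 1) ∧
    ∀ θ₁ θ₂ : ℝ, ‖φ' θ₁ - φ' θ₂‖ ≤ |θ₁ - θ₂| ^ α

/-- `Φ ∈ ẼNT`: an entropy whose angular derivative is `π`-antiperiodic
(odd entropies plus constants). -/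
def EntTilde (Φ : ℂ → ℂ) : Prop :=
  ∃ φ' : ℝ → ℂ, IsEnt Φ φ' ∧ ∀ θ : ℝ, φ' (θ + π) = - φ' θ

/-- `Φ ∈ ẼNT` with `‖Φ‖_{C^{1,α}} ≤ 1`. -/
def EntTildeC1aBall (α : ℝ) (Φ : ℂ → ℂ) : Prop :=
  ∃ φ' : ℝ → ℂ, IsEnt Φ φ' ∧ (∀ θ, ‖Φ (circ θ)‖ ≤ 1) ∧ (∀ θ, ‖φ' θ‖ ≤ 1) ∧
    (∀ θ₁ θ₂ : ℝ, ‖φ' θ₁ - φ' θ₂‖ ≤ |θ₁ - θ₂| ^ α) ∧ ∀ θ : ℝ, φ' (θ + π) = - φ' θ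

/-! ### Entropy productions as measures -/

/-- Integral of a function against a signed measure. -/
def sInt {X : Type*} [MeasurableSpace X] (σ : MeasureTheory.SignedMeasure X) (f : X → ℝ) : ℝ :=
  (∫ x, f x ∂σ.toJordanDecomposition.posPart) - ∫ x, f x ∂σ.toJordanDecomposition.negPart

/-- The (finite Radon) signed measure `μ` represents the distribution
`div Φ(m) : ζ ↦ -∫_Ω Φ(m)·∇ζ`. -/
def RepresentsDiv (Ω : Set ℂ) (m Φ : ℂ → ℂ) (μ : MeasureTheory.SignedMeasure ℂ) : Prop :=
  ∀ ζ : ℂ → ℝ, TestFun Ω ζ → -(∫ x in Ω, fderiv ℝ ζ x (Φ (m x))) = sInt μ ζ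

/-- The supremum measure `ν = ⋁ {|div Φ(m)| : Φ ∈ ENT, ‖Φ‖_{C^{1,1}} ≤ 1}`. -/
def entVarC11 (Ω : Set ℂ) (m : ℂ → ℂ) : Measure ℂ :=
  ⨆ Φ : {Φ : ℂ → ℂ // EntC11Ball Φ},
    ⨆ μ : {μ : MeasureTheory.SignedMeasure ℂ // RepresentsDiv Ω m Φ.1 μ}, μ.1.totalVariation

/-- The supremum measure `⋁ {|div Φ(m)| : Φ ∈ ENT, ‖Φ‖_{C^{1,α}} ≤ 1}`. -/
def entVarC1a (α : ℝ) (Ω : Set ℂ) (m : ℂ → ℂ) : Measure ℂ :=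
  ⨆ Φ : {Φ : ℂ → ℂ // EntC1aBall α Φ},
    ⨆ μ : {μ : MeasureTheory.SignedMeasure ℂ // RepresentsDiv Ω m Φ.1 μ}, μ.1.totalVariation

/-- The supremum measure `⋁ {|div Φ(m)| : Φ ∈ ẼNT, ‖Φ‖_{C^{1,α}} ≤ 1}`. -/
def entVarTildeC1a (α : ℝ) (Ω : Set ℂ) (m : ℂ → ℂ) : Measure ℂ :=
  ⨆ Φ : {Φ : ℂ → ℂ // EntTildeC1aBall α Φ},
    ⨆ μ : {μ : MeasureTheory.SignedMeasure ℂ // RepresentsDiv Ω m Φ.1 μ}, μ.1.totalVariation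

/-- The jump set `J_m = {x ∈ Ω : limsup_{r→0} ν(B_r(x))/r > 0}`. -/
def jumpSet (Ω : Set ℂ) (m : ℂ → ℂ) : Set ℂ :=
  {x ∈ Ω | 0 < Filter.limsup
    (fun r : ℝ => entVarC11 Ω m (Metric.ball x r) / ENNReal.ofReal r) (𝓝[>] (0:ℝ))}

/-- A set `J ⊆ ℂ` is (countably) `1`-rectifiable: up to an `H¹`-null set it is covered by
countably many Lipschitz images of `ℝ`. -/
def Rect1 (J : Set ℂ) : Prop :=
  ∃ (f : ℕ → ℝ → ℂ) (K : ℕ → ℝ≥0), (∀ n, LipschitzWith (K n) (f n)) ∧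
    μH[1] (J \ ⋃ n, Set.range (f n)) = 0

/-- `n, m⁺, m⁻` are a measure-theoretic unit normal and one-sided `L¹` traces of `m`
at `H¹`-a.e. point of the jump set `J_m`. -/
def TraceData (Ω : Set ℂ) (m n mp mm : ℂ → ℂ) : Prop :=
  ∀ᵐ x ∂((μH[1] : Measure ℂ).restrict (jumpSet Ω m)),
    ‖n x‖ = 1 ∧ ‖mp x‖ = 1 ∧ ‖mm x‖ = 1 ∧
    Filter.Tendsto
      (fun r : ℝ => (∫ y in Metric.ball x r ∩ {y | 0 < dotR (y - x) (n x)}, ‖m y - mp x‖) / r^2)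
      (𝓝[>] (0:ℝ)) (𝓝 0) ∧
    Filter.Tendsto
      (fun r : ℝ => (∫ y in Metric.ball x r ∩ {y | dotR (y - x) (n x) < 0}, ‖m y - mm x‖) / r^2)
      (𝓝[>] (0:ℝ)) (𝓝 0)

/-- The subset `J_m^δ ⊆ J_m` of jumps of (angular) amplitude larger than `δ`, defined through
trace functions `m⁺ = mp`, `m⁻ = mm`. -/
def Jdelta (Ω : Set ℂ) (m mp mm : ℂ → ℂ) (δ : ℝ) : Set ℂ :=
  {x ∈ jumpSet Ω m | δ < Real.arccos (dotR (mp x) (mm x))}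

/-! ### Mollifiers -/

/-- A mollifier: `ρ ∈ C_c¹(B₁)`, `ρ ≥ 0`, `∫ ρ = 1`, `|∇ρ| ≤ 2`. -/
def Mollifier (ρ : ℂ → ℝ) : Prop :=
  ContDiff ℝ 1 ρ ∧ HasCompactSupport ρ ∧ tsupport ρ ⊆ Metric.ball 0 1 ∧
    (∀ x, 0 ≤ ρ x) ∧ (∫ x, ρ x) = 1 ∧ ∀ x, ‖fderiv ℝ ρ x‖ ≤ 2

/-- The mollification `m_ε = m * ρ_ε`, where `ρ_ε(y) = ε⁻² ρ(y/ε)`. -/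
def mollify (ρ : ℂ → ℝ) (ε : ℝ) (m : ℂ → ℂ) (x : ℂ) : ℂ :=
  ∫ y, ((ε^2)⁻¹ * ρ (ε⁻¹ • y)) • m (x - y)

/-! ### The kinetic formulation -/

/-- `χ(x,s) = 1` if `e^{is}·m(x) > 0` and `0` otherwise. -/
def chi (m : ℂ → ℂ) (x : ℂ) (s : ℝ) : ℝ := if 0 < dotR (circ s) (m x) then 1 else 0

/-- Test functions for the kinetic equation on `Ω × 𝕋` (`𝕋 = ℝ/2πℤ`): smooth, `2π`-periodic in
the kinetic variable, compactly supported inside `Ω` in the space variable. -/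
def KineticTest (Ω : Set ℂ) (φ : ℂ → ℝ → ℝ) : Prop :=
  ContDiff ℝ (⊤ : ℕ∞) (fun p : ℂ × ℝ => φ p.1 p.2) ∧ (∀ x s, φ x (s + 2*π) = φ x s) ∧
    ∃ K : Set ℂ, IsCompact K ∧ K ⊆ Ω ∧ ∀ x ∉ K, ∀ s, φ x s = 0

/-- `σ` is a kinetic measure for `m` : it is a finite signed (Radon) measure on `Ω × 𝕋`
(realized as `Ω × [0,2π)`) such that `e^{is}·∇ₓχ = ∂ₛσ` in `𝒟'(Ω × 𝕋)`. -/
def IsKineticMeasure (Ω : Set ℂ) (m : ℂ → ℂ) (σ : MeasureTheory.SignedMeasure (ℂ × ℝ)) : Prop :=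
  σ.totalVariation (Ω ×ˢ Set.Ico 0 (2*π))ᶜ = 0 ∧
    ∀ φ : ℂ → ℝ → ℝ, KineticTest Ω φ →
      (∫ x in Ω, ∫ s in Set.Ico 0 (2*π), chi m x s * fderiv ℝ (fun y => φ y s) x (circ s))
        = - sInt σ (fun p => deriv (fun s => φ p.1 s) p.2)

/-- `σ` is the kinetic measure of minimal total variation. -/
def IsMinKinetic (Ω : Set ℂ) (m : ℂ → ℂ) (σ : MeasureTheory.SignedMeasure (ℂ × ℝ)) : Prop :=
  IsKineticMeasure Ω m σ ∧
    ∀ σ' : MeasureTheory.SignedMeasure (ℂ × ℝ), IsKineticMeasure Ω m σ' →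
      σ.totalVariation Set.univ ≤ σ'.totalVariation Set.univ

/-- `ν_min = (p_x)_♯ |σ_min|`. -/
def nuMin (σ : MeasureTheory.SignedMeasure (ℂ × ℝ)) : Measure ℂ :=
  σ.totalVariation.map Prod.fst

/-- The entropy `Φ_ψ(z) = ∫_𝕋 1_{e^{is}·z>0} ψ(s) e^{is} ds` associated with `ψ : 𝕋 → ℝ`. -/
def PhiPsi (ψ : ℝ → ℝ) (z : ℂ) : ℂ :=
  ∫ s in Set.Ico 0 (2*π), {s' : ℝ | 0 < dotR (circ s') z}.indicator (fun s' => ψ s' • circ s') s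

/-! ### Lagrangian representations -/

/-- A (candidate) Lagrangian trajectory: a time interval `(tm, tp)`, a spatial component `x`,
a lifted angular component `s`, and the derivative measure `Ds` of `s`. -/
structure Curve where
  tm : ℝ
  tp : ℝ
  x : ℝ → ℂ
  s : ℝ → ℝ
  Ds : MeasureTheory.SignedMeasure ℝ

instance : MeasurableSpace Curve := ⊤

/-- The open time interval of a curve. -/
def Curve.I (γ : Curve) : Set ℝ := Set.Ioo γ.tm γ.tp

/-- A curve is admissible: `0 ≤ tm ≤ tp ≤ T`, `γ_x` Lipschitz with values in `Ω̄`, `γ_s`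
right-continuous of bounded variation with derivative measure `Ds` carried by the time interval. -/
def Curve.Valid (T : ℝ) (Ω : Set ℂ) (γ : Curve) : Prop :=
  0 ≤ γ.tm ∧ γ.tm ≤ γ.tp ∧ γ.tp ≤ T ∧
    (∃ L : ℝ≥0, LipschitzOnWith L γ.x (Set.Icc γ.tm γ.tp)) ∧
    (∀ t ∈ Set.Icc γ.tm γ.tp, γ.x t ∈ closure Ω) ∧
    (∀ t ∈ γ.I, Filter.Tendsto γ.s (𝓝[>] t) (𝓝 (γ.s t))) ∧
    (∀ a ∈ γ.I, ∀ b ∈ γ.I, a ≤ b → γ.s b - γ.s a = γ.Ds (Set.Ioc a b)) ∧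
    γ.Ds.totalVariation γ.Iᶜ = 0

/-- Reduction mod `2π` to `[0, 2π)`. -/
def wrap (s : ℝ) : ℝ := s - 2*π*(⌊s/(2*π)⌋ : ℝ)

/-- The set of atoms of a signed measure on `ℝ`. -/
def atomSet (μ : MeasureTheory.SignedMeasure ℝ) : Set ℝ := {t | μ.totalVariation {t} ≠ 0}

/-- `|D^j v|`: the jump (atomic) part of the total variation of a derivative measure. -/
def jumpTV (μ : MeasureTheory.SignedMeasure ℝ) : Measure ℝ :=
  μ.totalVariation.restrict (atomSet μ)

/-- `|D̃ v|`: the diffuse (continuous) part of the total variation of a derivative measure. -/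
def diffTV (μ : MeasureTheory.SignedMeasure ℝ) : Measure ℝ :=
  μ.totalVariation.restrict (atomSet μ)ᶜ

/-- `ω` is a Lagrangian representation of `m` on `[0,T]`. -/
def IsLagRep (T : ℝ) (Ω : Set ℂ) (m : ℂ → ℂ) (ω : Measure Curve) : Prop :=
  (∀ᵐ γ ∂ω, γ.Valid T Ω) ∧
  (∀ t ∈ Set.Ioo (0:ℝ) T,
    Measure.map (fun γ : Curve => (γ.x t, wrap (γ.s t))) (ω.restrict {γ : Curve | t ∈ γ.I})
      = ((volume.restrict Ω).prod (volume.restrict (Set.Ico 0 (2*π)))).restrict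
          {p : ℂ × ℝ | 0 < dotR (circ p.2) (m p.1)}) ∧
  (∀ᵐ γ ∂ω, ∀ᵐ t ∂(volume.restrict γ.I), HasDerivAt γ.x (circ (γ.s t)) t) ∧
  (∫⁻ γ, γ.Ds.totalVariation Set.univ ∂ω) < ⊤ ∧
  (∀ᵐ γ ∂ω, (0 < γ.tm → γ.x γ.tm ∈ frontier Ω) ∧ (γ.tp < T → γ.x γ.tp ∈ frontier Ω))

/-- `ω` is a minimal Lagrangian representation of `m`, relative to the minimal kinetic
measure `σmin`. -/
def IsMinLagRep (T : ℝ) (Ω : Set ℂ) (m : ℂ → ℂ) (σmin : MeasureTheory.SignedMeasure (ℂ × ℝ))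
    (ω : Measure Curve) : Prop :=
  IsLagRep T Ω m ω ∧
    (∫⁻ γ, γ.Ds.totalVariation Set.univ ∂ω) = ENNReal.ofReal T * σmin.totalVariation Set.univ

/-- A bounded open set of class `C^{1,1}`: near each boundary point, `Ω` is the subgraph of a
`C^{1,1}` function in a suitable orthonormal frame. -/
def C11Domain (Ω : Set ℂ) : Prop :=
  ∀ z ∈ frontier Ω, ∃ (e : ℂ) (r : ℝ) (f f' : ℝ → ℝ) (L : ℝ≥0),
    0 < r ∧ ‖e‖ = 1 ∧ (∀ t, HasDerivAt f (f' t) t) ∧ LipschitzWith L f' ∧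
    ∀ y ∈ Metric.ball z r, (y ∈ Ω ↔ dotR (y - z) e < f (dotR (y - z) (Complex.I * e)))

/-- `x` is a Lebesgue point of `f` with value `c`, with respect to the measure `ρ`. -/
def LebesguePtVal (ρ : Measure ℂ) (f : ℂ → ℝ) (x : ℂ) (c : ℝ) : Prop :=
  f x = c ∧
    Filter.Tendsto
      (fun r : ℝ => (∫⁻ y in Metric.ball x r, ENNReal.ofReal |f y - c| ∂ρ) / ρ (Metric.ball x r))
      (𝓝[>] (0:ℝ)) (𝓝 0)

/-! ## STATEMENT 1 -/

open scoped CompactlySupported Convolution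
open ContinuousLinearMap (lsmul)

/-!
Extended to `ℂ` with homogeneity of degree three, an entropy `Φ` has differential
`DΦ(z) = γ(z) id + 2 ⟨z, ·⟩ Ψ(z)`, with `γ` real-valued and `Ψ` of class `C^{0,α}` on the unit disc.
Let `m_ε` be a mollification of `m`, so that `div m_ε = 0` away from `∂Ω`. The field
`Φ(m_ε) + (1 - |m_ε|²) (Ψ(m))_ε` converges to `Φ(m)`, and its divergence is
`-⟨∇(1 - |m_ε|²), Ψ(m_ε) - (Ψ(m))_ε⟩ + (1 - |m_ε|²) div (Ψ(m))_ε`. Since `|m| = 1`, each of the four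
factors is controlled by increments of `m` at scale `ε`: `1 - |m_ε|²` is quadratic in them,
`Ψ(m_ε) - (Ψ(m))_ε` is of order `α`, and each derivative costs a factor `ε⁻¹`. The divergence is
thus at most a constant times `ε⁻¹ ⨍_{|h| ≤ ε} |m(x + h) - m(x)|^{2 + α} dh`. These densities do not
depend on `Φ`, and their integrals are bounded by the Besov seminorm to the power `2 + α`. A vague
limit of them as `ε → 0` dominates every `|div Φ(m)|`, hence their supremum.
-/

/-! ### Vague compactness of bounded families of measures -/

section VagueLimit

variable {X ι : Type*} [TopologicalSpace X] [MeasurableSpace X]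

theorem exists_tendsto_integral_of_measure_univ_le [OpensMeasurableSpace X] (l : Ultrafilter ι)
    {μ : ι → Measure X} {K : ℝ≥0} (hμ : ∀ i, μ i univ ≤ K) (f : C_c(X, ℝ)) :
    ∃ L, Tendsto (fun i => ∫ x, f x ∂μ i) l (𝓝 L) := by
  obtain ⟨B, hB⟩ := f.hasCompactSupport.exists_bound_of_continuous f.continuous
  have hbound (i : ι) : ∫ x, f x ∂μ i ∈ closedBall (0 : ℝ) (|B| * K) := by
    have : IsFiniteMeasure (μ i) := ⟨(hμ i).trans_lt ENNReal.coe_lt_top⟩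
    rw [mem_closedBall_zero_iff]
    calc ‖∫ x, f x ∂μ i‖
        ≤ |B| * (μ i).real univ := norm_integral_le_of_norm_le_const
          (Eventually.of_forall fun x => (hB x).trans (le_abs_self B))
      _ ≤ |B| * K := by
          gcongr
          exact ENNReal.toReal_le_coe_of_le_coe (hμ i)
  obtain ⟨L, -, hL⟩ := (isCompact_closedBall (0 : ℝ) (|B| * K)).ultrafilter_le_nhds
    (l.map fun i => ∫ x, f x ∂μ i) (le_principal_iff.2 (Filter.mem_map.2 (univ_mem' hbound)))
  exact ⟨L, hL⟩

theorem exists_positiveLinearMap_tendsto_integral [OpensMeasurableSpace X] (l : Ultrafilter ι)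
    {μ : ι → Measure X} {K : ℝ≥0} (hμ : ∀ i, μ i univ ≤ K) :
    ∃ Λ : C_c(X, ℝ) →ₚ[ℝ] ℝ, ∀ f, Tendsto (fun i => ∫ x, f x ∂μ i) l (𝓝 (Λ f)) := by
  choose L hL using exists_tendsto_integral_of_measure_univ_le l hμ
  have (i : ι) : IsFiniteMeasure (μ i) := ⟨(hμ i).trans_lt ENNReal.coe_lt_top⟩
  have hint (f : C_c(X, ℝ)) (i : ι) : Integrable f (μ i) :=
    f.continuous.integrable_of_hasCompactSupport f.hasCompactSupport
  let L' : C_c(X, ℝ) →ₗ[ℝ] ℝ :=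
    { toFun := L
      map_add' := fun f g => tendsto_nhds_unique (hL (f + g)) <|
        ((hL f).add (hL g)).congr fun i => (integral_add (hint f i) (hint g i)).symm
      map_smul' := fun c f => tendsto_nhds_unique (hL (c • f)) <|
        ((hL f).const_smul c).congr fun i => (integral_smul c f).symm }
  exact ⟨PositiveLinearMap.mk₀ L' fun f hf =>
    ge_of_tendsto (hL f) (Eventually.of_forall fun i => integral_nonneg hf), hL⟩

variable [T2Space X] [LocallyCompactSpace X] [SigmaCompactSpace X] [BorelSpace X]

theorem rieszMeasure_univ_le {Λ : C_c(X, ℝ) →ₚ[ℝ] ℝ} {K : ℝ}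
    (hΛ : ∀ f : C_c(X, ℝ), (∀ x, f x ∈ Icc (0 : ℝ) 1) → Λ f ≤ K) :
    RealRMK.rieszMeasure Λ univ ≤ ENNReal.ofReal K := by
  have hcompact (n : ℕ) : RealRMK.rieszMeasure Λ (compactCovering X n) ≤ ENNReal.ofReal K := by
    obtain ⟨f, hf_one, -, hf_compact, hf⟩ := exists_continuous_one_zero_of_isCompact
      (isCompact_compactCovering X n) isClosed_empty (disjoint_empty _)
    exact (RealRMK.rieszMeasure_le_of_eq_one Λ (f := ⟨f, hf_compact⟩) (fun x => (hf x).1)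
      (isCompact_compactCovering X n) hf_one).trans (ENNReal.ofReal_le_ofReal (hΛ _ hf))
  rw [← iUnion_compactCovering X, Monotone.measure_iUnion (compactCovering_subset X)]
  exact iSup_le hcompact

theorem exists_measure_tendsto_integral (l : Ultrafilter ι) {μ : ι → Measure X}
    {K : ℝ≥0} (hμ : ∀ i, μ i univ ≤ K) :
    ∃ ν : Measure X, ν univ ≤ K ∧
      ∀ f : C_c(X, ℝ), Tendsto (fun i => ∫ x, f x ∂μ i) l (𝓝 (∫ x, f x ∂ν)) := by
  obtain ⟨Λ, hΛ⟩ := exists_positiveLinearMap_tendsto_integral l hμ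
  refine ⟨RealRMK.rieszMeasure Λ, ?_, fun f => ?_⟩
  · rw [← ENNReal.ofReal_coe_nnreal]
    refine rieszMeasure_univ_le fun f hf =>
      le_of_tendsto (hΛ f) (Eventually.of_forall fun i => ?_)
    have : IsFiniteMeasure (μ i) := ⟨(hμ i).trans_lt ENNReal.coe_lt_top⟩
    calc ∫ x, f x ∂μ i
        ≤ ∫ _, (1 : ℝ) ∂μ i := integral_mono
          (f.continuous.integrable_of_hasCompactSupport f.hasCompactSupport)
          (integrable_const 1) fun x => (hf x).2
      _ = (μ i).real univ := by simp
      _ ≤ K := ENNReal.toReal_le_coe_of_le_coe (hμ i)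
  · rw [RealRMK.integral_rieszMeasure]
    exact hΛ f

end VagueLimit

/-! ### Signed measures dominated on test functions -/

section SignedMeasure

variable {X : Type*} [MeasurableSpace X]

theorem sInt_toSignedMeasure_sub (μ₁ μ₂ : Measure X) [IsFiniteMeasure μ₁] [IsFiniteMeasure μ₂]
    {f : X → ℝ} (hf : StronglyMeasurable f) {B : ℝ} (hB : ∀ x, ‖f x‖ ≤ B) :
    sInt (μ₁.toSignedMeasure - μ₂.toSignedMeasure) f = ∫ x, f x ∂μ₁ - ∫ x, f x ∂μ₂ := by
  set j := (μ₁.toSignedMeasure - μ₂.toSignedMeasure).toJordanDecomposition with hj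
  have hint (μ : Measure X) [IsFiniteMeasure μ] : Integrable f μ :=
    .of_bound hf.aestronglyMeasurable B (Eventually.of_forall hB)
  have hparts : j.posPart + μ₂ = μ₁ + j.negPart := by
    rw [← Measure.toSignedMeasure_eq_toSignedMeasure_iff, Measure.toSignedMeasure_add,
      Measure.toSignedMeasure_add, ← sub_eq_sub_iff_add_eq_add]
    exact SignedMeasure.toSignedMeasure_toJordanDecomposition _
  have hintegral := congrArg (fun μ : Measure X => ∫ x, f x ∂μ) hparts
  rw [integral_add_measure (hint _) (hint _), integral_add_measure (hint _) (hint _)] at hintegral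
  rw [sInt, ← hj]
  linarith

theorem sInt_withDensityᵥ {ν : Measure X} {g : X → ℝ} (hg : Integrable g ν) {f : X → ℝ}
    (hf : StronglyMeasurable f) {B : ℝ} (hB : ∀ x, ‖f x‖ ≤ B) :
    sInt (ν.withDensityᵥ g) f = ∫ x, g x * f x ∂ν := by
  have := isFiniteMeasure_withDensity_ofReal hg.2
  have : IsFiniteMeasure (ν.withDensity fun x => ENNReal.ofReal (-g x)) :=
    isFiniteMeasure_withDensity_ofReal hg.neg.2
  have hmul {u : X → ℝ} (hu : Integrable u ν) : Integrable (fun x => u x * f x) ν :=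
    hu.mul_bdd hf.aestronglyMeasurable (Eventually.of_forall hB)
  rw [withDensityᵥ_eq_withDensity_pos_part_sub_withDensity_neg_part hg,
    sInt_toSignedMeasure_sub _ _ hf hB,
    integral_withDensity_eq_integral_toReal_smul₀ hg.aemeasurable.ennreal_ofReal
      (Eventually.of_forall fun _ => ENNReal.ofReal_lt_top),
    integral_withDensity_eq_integral_toReal_smul₀ hg.aemeasurable.fun_neg.ennreal_ofReal
      (Eventually.of_forall fun _ => ENNReal.ofReal_lt_top)]
  simp only [ENNReal.toReal_ofReal', smul_eq_mul]
  rw [← integral_sub (hmul hg.pos_part) (hmul hg.neg_part)]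
  refine integral_congr_ae (Eventually.of_forall fun x => ?_)
  simp only [← sub_mul]
  rw [max_zero_sub_max_neg_zero_eq_self]

theorem exists_eq_inner_of_abs_le {V H : Type*} [AddCommGroup V] [Module ℝ V]
    [NormedAddCommGroup H] [InnerProductSpace ℝ H] [CompleteSpace H] (T : V →ₗ[ℝ] ℝ)
    (J : V →ₗ[ℝ] H) {C : ℝ} (hT : ∀ v, |T v| ≤ C * ‖J v‖) :
    ∃ w : H, ∀ v, T v = inner ℝ w (J v) := by
  obtain ⟨R, hR⟩ := J.rangeRestrict.exists_rightInverse_of_surjective J.range_rangeRestrict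
  have hJR (w : LinearMap.range J) : J (R w) = w :=
    congrArg Subtype.val (LinearMap.congr_fun hR w)
  have hTR (v : V) : T (R (J.rangeRestrict v)) = T v := by
    have h := hT (R (J.rangeRestrict v) - v)
    rw [map_sub, map_sub, hJR, LinearMap.codRestrict_apply, sub_self, norm_zero, mul_zero] at h
    exact sub_eq_zero.1 (abs_nonpos_iff.1 h)
  let S : StrongDual ℝ (LinearMap.range J) := (T ∘ₗ R).mkContinuous C fun w => by
    simpa [hJR] using hT (R w)
  obtain ⟨G, hG, -⟩ := exists_extension_norm_eq (LinearMap.range J) S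
  refine ⟨(InnerProductSpace.toDual ℝ H).symm G, fun v => ?_⟩
  rw [InnerProductSpace.toDual_symm_apply, ← hTR v]
  exact (hG (J.rangeRestrict v)).symm

theorem integral_abs_le_sqrt_mul_norm_toLp (ν : Measure X) [IsFiniteMeasure ν] {f : X → ℝ}
    (hf : MemLp f 2 ν) : ∫ x, |f x| ∂ν ≤ √(ν.real univ) * ‖hf.toLp f‖ := by
  have hle := ENNReal.toReal_mono (ENNReal.mul_ne_top hf.2.ne
      (ENNReal.rpow_ne_top_of_nonneg (by norm_num) (measure_ne_top ν univ)))
    (eLpNorm_le_eLpNorm_mul_rpow_measure_univ (p := 1) (q := 2) one_le_two hf.1)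
  rw [ENNReal.toReal_mul, ← ENNReal.toReal_rpow, eLpNorm_one_eq_lintegral_enorm,
    ← integral_norm_eq_lintegral_enorm hf.1] at hle
  calc ∫ x, |f x| ∂ν ≤ _ := hle
    _ = √(ν.real univ) * ‖hf.toLp f‖ := by
        rw [Lp.norm_toLp, mul_comm, Real.sqrt_eq_rpow, Measure.real]
        norm_num

/-- Riesz representation in `L²(ν)` replaces the duality of `L¹(ν)` and `L^∞(ν)`. -/
theorem exists_signedMeasure_eq_sInt (ν : Measure X) [IsFiniteMeasure ν]
    {V : Submodule ℝ (X → ℝ)} (hV : ∀ f ∈ V, StronglyMeasurable f)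
    (hb : ∀ f ∈ V, ∃ B, ∀ x, ‖f x‖ ≤ B) (T : V →ₗ[ℝ] ℝ) (hT : ∀ f : V, |T f| ≤ ∫ x, |f.1 x| ∂ν) :
    ∃ μ : SignedMeasure X, ∀ f : V, T f = sInt μ f := by
  have hLp (f : V) : MemLp f.1 2 ν := by
    obtain ⟨B, hB⟩ := hb f f.2
    exact .of_bound (hV f f.2).aestronglyMeasurable B (Eventually.of_forall hB)
  let J : V →ₗ[ℝ] Lp ℝ 2 ν :=
    { toFun := fun f => (hLp f).toLp f
      map_add' := fun _ _ => rfl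
      map_smul' := fun _ _ => rfl }
  obtain ⟨g, hg⟩ := exists_eq_inner_of_abs_le T J fun f =>
    (hT f).trans (integral_abs_le_sqrt_mul_norm_toLp ν (hLp f))
  refine ⟨ν.withDensityᵥ g, fun f => ?_⟩
  obtain ⟨B, hB⟩ := hb f f.2
  rw [hg f, sInt_withDensityᵥ ((Lp.memLp g).integrable one_le_two) (hV f f.2) hB, L2.inner_def]
  refine integral_congr_ae ?_
  filter_upwards [(hLp f).coeFn_toLp] with x hx
  change inner ℝ (g x) ((hLp f).toLp f.1 x) = g x * f.1 x
  rw [hx]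
  exact mul_comm _ _

theorem abs_integral_sub_measureReal_le (μ : Measure X) [IsFiniteMeasure μ] {K E U : Set X}
    (hK : MeasurableSet K) (hU : MeasurableSet U) (hKE : K ⊆ E) (hEU : E ⊆ U) {f : X → ℝ}
    (hf : Integrable f μ) (hKf : K.indicator 1 ≤ f) (hfU : f ≤ U.indicator 1) :
    |∫ x, f x ∂μ - μ.real E| ≤ μ.real (U \ K) := by
  have hone {s : Set X} (hs : MeasurableSet s) : Integrable (s.indicator (1 : X → ℝ)) μ :=
    (integrable_const (1 : ℝ)).indicator hs
  have hlower : μ.real K ≤ ∫ x, f x ∂μ := by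
    rw [← integral_indicator_one hK]
    exact integral_mono (hone hK) hf hKf
  have hupper : ∫ x, f x ∂μ ≤ μ.real U := by
    rw [← integral_indicator_one hU]
    exact integral_mono hf (hone hU) hfU
  rw [measureReal_sdiff (hKE.trans hEU) hK, abs_le]
  constructor <;> linarith [measureReal_mono (μ := μ) hKE, measureReal_mono (μ := μ) hEU]

end SignedMeasure

section TestFun

theorem TestFun.continuous {Ω : Set ℂ} {ζ : ℂ → ℝ} (hζ : TestFun Ω ζ) : Continuous ζ :=
  hζ.1.continuous

theorem TestFun.mono {Ω Ω' : Set ℂ} {ζ : ℂ → ℝ} (hζ : TestFun Ω ζ) (h : Ω ⊆ Ω') :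
    TestFun Ω' ζ :=
  ⟨hζ.1, hζ.2.1, hζ.2.2.trans h⟩

theorem TestFun.integrable {Ω : Set ℂ} {ζ : ℂ → ℝ} (hζ : TestFun Ω ζ) (μ : Measure ℂ)
    [IsFiniteMeasureOnCompacts μ] : Integrable ζ μ :=
  hζ.continuous.integrable_of_hasCompactSupport hζ.2.1

/-- The real vector space of test functions in `Ω`, the domain of distributions on `Ω`. -/
def testFunSubmodule (Ω : Set ℂ) : Submodule ℝ (ℂ → ℝ) where
  carrier := {ζ | TestFun Ω ζ}
  add_mem' := by
    rintro f g ⟨hf, hf_compact, hf_supp⟩ ⟨hg, hg_compact, hg_supp⟩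
    exact ⟨hf.add hg, hf_compact.add hg_compact,
      (tsupport_add f g).trans (union_subset hf_supp hg_supp)⟩
  zero_mem' := ⟨contDiff_const, .zero, by simp [tsupport]⟩
  smul_mem' := by
    rintro c f ⟨hf, hf_compact, hf_supp⟩
    exact ⟨hf.const_smul c, hf_compact.smul_left (f := fun _ => c),
      (tsupport_smul_subset_right (fun _ => c) f).trans hf_supp⟩

theorem exists_testFun_indicator_le_le_indicator {K U : Set ℂ} (hK : IsCompact K) (hU : IsOpen U)
    (hKU : K ⊆ U) : ∃ ζ, TestFun U ζ ∧ K.indicator 1 ≤ ζ ∧ ζ ≤ U.indicator 1 := by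
  obtain ⟨L, hL, hKL, hLU⟩ := exists_compact_between hK hU hKU
  obtain ⟨f, hf_zero, hf_one, hf⟩ := exists_contMDiffMap_zero_one_of_isClosed (n := (⊤ : ℕ∞))
    (modelWithCornersSelf ℝ ℂ) (isOpen_interior (s := L)).isClosed_compl hK.isClosed
    (disjoint_left.2 fun x hx hxK => hx (hKL hxK))
  have hsupp : Function.support f ⊆ L := fun x hx => by
    by_contra hxL
    exact hx (hf_zero fun h => hxL (interior_subset h))
  refine ⟨f, ⟨f.contMDiff.contDiff, .of_support_subset_isCompact hL hsupp,
    (closure_minimal hsupp hL.isClosed).trans hLU⟩, fun x => ?_, fun x => ?_⟩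
  · exact indicator_apply_le' (fun hx => (hf_one hx).ge) fun _ => (hf x).1
  · exact le_indicator_apply (fun _ => (hf x).2) fun hx =>
      (Function.notMem_support.1 fun h => hx (hLU (hsupp h))).le

theorem exists_testFun_abs_integral_sub_measureReal_le {Ω : Set ℂ} (hΩ : IsOpen Ω)
    (τ : Measure ℂ) [IsFiniteMeasure τ] {E : Set ℂ} (hE : MeasurableSet E) (hEΩ : E ⊆ Ω)
    {ε : ℝ} (hε : 0 < ε) :
    ∃ ζ, TestFun Ω ζ ∧ 0 ≤ ζ ∧ ∀ μ ≤ τ, |∫ x, ζ x ∂μ - μ.real E| ≤ ε := by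
  have hε' : ENNReal.ofReal (ε / 2) ≠ 0 := (ENNReal.ofReal_pos.2 (half_pos hε)).ne'
  obtain ⟨K, hKE, hK, hKτ⟩ := hE.exists_isCompact_sdiff_lt (μ := τ) (measure_ne_top _ _) hε'
  obtain ⟨U, hEU, hU, -, hUτ⟩ := hE.exists_isOpen_sdiff_lt (μ := τ) (measure_ne_top _ _) hε'
  have hEU' : E ⊆ U ∩ Ω := subset_inter hEU hEΩ
  obtain ⟨ζ, hζ, hKζ, hζU⟩ :=
    exists_testFun_indicator_le_le_indicator hK (hU.inter hΩ) (hKE.trans hEU')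
  have hdiff : τ.real ((U ∩ Ω) \ K) ≤ ε := by
    refine ENNReal.toReal_le_of_le_ofReal hε.le ?_
    calc τ ((U ∩ Ω) \ K) ≤ τ (U \ E ∪ E \ K) := measure_mono fun x hx => by
          by_cases hxE : x ∈ E
          exacts [.inr ⟨hxE, hx.2⟩, .inl ⟨hx.1.1, hxE⟩]
      _ ≤ τ (U \ E) + τ (E \ K) := measure_union_le _ _
      _ ≤ ENNReal.ofReal (ε / 2) + ENNReal.ofReal (ε / 2) := add_le_add hUτ.le hKτ.le
      _ = ENNReal.ofReal ε := by
          rw [← ENNReal.ofReal_add (by positivity) (by positivity), add_halves]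
  refine ⟨ζ, hζ.mono inter_subset_right,
    fun x => (indicator_nonneg (fun _ _ => zero_le_one) x).trans (hKζ x), fun μ hμ => ?_⟩
  have : IsFiniteMeasure μ := isFiniteMeasure_of_le τ hμ
  exact ((abs_integral_sub_measureReal_le μ hK.measurableSet (hU.inter hΩ).measurableSet hKE hEU'
    (hζ.integrable μ) hKζ hζU).trans
      (ENNReal.toReal_mono (measure_ne_top _ _) (hμ _))).trans hdiff

theorem abs_apply_le_of_abs_sInt_le {Ω : Set ℂ} (hΩ : IsOpen Ω) {μ : SignedMeasure ℂ}
    {ν : Measure ℂ} [IsFiniteMeasure ν] (h : ∀ ζ, TestFun Ω ζ → |sInt μ ζ| ≤ ∫ x, |ζ x| ∂ν)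
    {E : Set ℂ} (hE : MeasurableSet E) (hEΩ : E ⊆ Ω) : |μ E| ≤ ν.real E := by
  set p := μ.toJordanDecomposition.posPart
  set q := μ.toJordanDecomposition.negPart
  refine le_of_forall_pos_le_add fun ε hε => ?_
  obtain ⟨ζ, hζ, hζ_nonneg, happrox⟩ :=
    exists_testFun_abs_integral_sub_measureReal_le hΩ (p + q + ν) hE hEΩ (ε := ε / 3)
      (by positivity)
  have hp := abs_le.1 (happrox p (Measure.le_add_right (Measure.le_add_right le_rfl)))
  have hq := abs_le.1 (happrox q (Measure.le_add_right (Measure.le_add_left le_rfl)))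
  have hν := abs_le.1 (happrox ν (Measure.le_add_left le_rfl))
  have hbound := h ζ hζ
  simp only [abs_of_nonneg (hζ_nonneg _)] at hbound
  have hsInt := abs_le.1 hbound
  rw [sInt] at hsInt
  rw [SignedMeasure.apply_eq_posPart_real_sub_negPart_real μ hE, abs_le]
  constructor <;> linarith

theorem totalVariation_le_of_abs_sInt_le {Ω : Set ℂ} (hΩ : IsOpen Ω) {μ : SignedMeasure ℂ}
    {ν : Measure ℂ} [IsFiniteMeasure ν] (h : ∀ ζ, TestFun Ω ζ → |sInt μ ζ| ≤ ∫ x, |ζ x| ∂ν)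
    {A : Set ℂ} (hA : MeasurableSet A) (hAΩ : A ⊆ Ω) : μ.totalVariation A ≤ ν A := by
  rw [SignedMeasure.totalVariation_eq_variation]
  refine VectorMeasure.variation_apply_le_of_forall_enorm_le hA fun E hE hEA => ?_
  rw [← ofReal_norm, ← ofReal_measureReal]
  exact ENNReal.ofReal_le_ofReal (abs_apply_le_of_abs_sInt_le hΩ h hE (hEA.trans hAΩ))

end TestFun

/-! ### The cubic extension of an entropy -/

section Circle

theorem norm_circ (θ : ℝ) : ‖circ θ‖ = 1 := Complex.norm_exp_ofReal_mul_I θ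

theorem circ_ne_zero (θ : ℝ) : circ θ ≠ 0 := Complex.exp_ne_zero _

theorem circ_add (a b : ℝ) : circ (a + b) = circ a * circ b := by
  rw [circ, circ, circ, ← Complex.exp_add]
  push_cast
  ring_nf

theorem norm_smul_circ_arg (z : ℂ) : ‖z‖ • circ z.arg = z :=
  (Complex.real_smul).trans (Complex.norm_mul_exp_arg_mul_I z)

theorem circ_arg_of_norm_eq_one {z : ℂ} (hz : ‖z‖ = 1) : circ z.arg = z := by
  simpa only [hz, one_smul] using norm_smul_circ_arg z

theorem circ_arg_eq_div_norm {z : ℂ} (hz : z ≠ 0) : circ z.arg = z / ‖z‖ := by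
  rw [eq_div_iff (by simpa using hz), mul_comm, ← Complex.real_smul, norm_smul_circ_arg]

theorem circ_arg_add_arg_div {y z : ℂ} (hy : y ≠ 0) (hz : z ≠ 0) :
    circ (z.arg + (y / z).arg) = circ y.arg := by
  have hz_norm : (‖z‖ : ℂ) ≠ 0 := by simpa using hz
  rw [circ_add, circ_arg_eq_div_norm hz, circ_arg_eq_div_norm hy,
    circ_arg_eq_div_norm (div_ne_zero hy hz), norm_div, Complex.ofReal_div]
  field_simp

theorem exists_circ_add_eq_and_abs_le (a b : ℝ) :
    ∃ t, circ (b + t) = circ a ∧ |t| ≤ π ∧ |t| ≤ 2 * ‖circ a - circ b‖ := by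
  refine ⟨(circ a / circ b).arg, ?_, Complex.abs_arg_le_pi _, ?_⟩
  · rw [circ_add, circ_arg_of_norm_eq_one (by rw [norm_div, norm_circ, norm_circ, div_one]),
      mul_div_cancel₀ _ (circ_ne_zero b)]
  · rw [← Complex.angle_eq_abs_arg (circ_ne_zero a) (circ_ne_zero b)]
    refine (Complex.angle_le_mul_norm_sub (norm_circ a) (norm_circ b)).trans ?_
    gcongr
    linarith [Real.pi_le_four]

theorem exists_eq_smul_I_mul_of_dotR_eq_zero {v e : ℂ} (he : ‖e‖ = 1) (h : dotR v e = 0) :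
    ∃ a : ℝ, v = a • (Complex.I * e) ∧ |a| = ‖v‖ := by
  have hsq : e.re * e.re + e.im * e.im = 1 := by
    rw [← Complex.normSq_apply, Complex.normSq_eq_norm_sq, he, one_pow]
  have hv : v = (v.im * e.re - v.re * e.im) • (Complex.I * e) := by
    rw [dotR] at h
    apply Complex.ext <;>
      simp only [Complex.smul_re, Complex.smul_im, Complex.mul_re, Complex.mul_im, Complex.I_re,
        Complex.I_im, smul_eq_mul]
    · linear_combination (-v.re) * hsq + e.re * h
    · linear_combination (-v.im) * hsq + e.im * h
  refine ⟨_, hv, ?_⟩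
  conv_rhs => rw [hv]
  rw [norm_smul, norm_mul, Complex.norm_I, he, one_mul, mul_one, Real.norm_eq_abs]

end Circle

section Holder

variable {α : ℝ}

theorem le_mul_rpow_of_le (hα : α ∈ Ioc (0 : ℝ) 1) {t B : ℝ} (ht : 0 ≤ t) (hB : 1 ≤ B)
    (htB : t ≤ B) : t ≤ B * t ^ α := by
  rcases ht.eq_or_lt with rfl | ht_pos
  · positivity
  calc t = t ^ (1 - α) * t ^ α := by rw [← Real.rpow_add ht_pos, sub_add_cancel, Real.rpow_one]
    _ ≤ B ^ (1 - α) * t ^ α := by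
        gcongr
        linarith [hα.2]
    _ ≤ B * t ^ α := by
        gcongr
        exact Real.rpow_le_self_of_one_le hB (by linarith [hα.1])

theorem two_mul_rpow_le (hα : α ∈ Ioc (0 : ℝ) 1) {t : ℝ} (ht : 0 ≤ t) :
    (2 * t) ^ α ≤ 2 * t ^ α := by
  rw [Real.mul_rpow zero_le_two ht]
  gcongr
  exact Real.rpow_le_self_of_one_le one_le_two hα.2

theorem norm_sub_le_norm_circ_sub_circ_rpow (hα : α ∈ Ioc (0 : ℝ) 1) {E : Type*}
    [SeminormedAddCommGroup E] {f : ℝ → E} (hf : ∀ a b, circ a = circ b → f a = f b) {C : ℝ}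
    (hC : 0 ≤ C) (hf_holder : ∀ a b, |a - b| ≤ π → ‖f a - f b‖ ≤ C * |a - b| ^ α) (a b : ℝ) :
    ‖f a - f b‖ ≤ 2 * C * ‖circ a - circ b‖ ^ α := by
  obtain ⟨t, hta, htπ, ht⟩ := exists_circ_add_eq_and_abs_le a b
  rw [← hf _ _ hta]
  calc ‖f (b + t) - f b‖ ≤ C * |t| ^ α := by
        simpa only [add_sub_cancel_left] using
          hf_holder (b + t) b (by rwa [add_sub_cancel_left])
    _ ≤ C * (2 * ‖circ a - circ b‖) ^ α := by
        gcongr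
        exact hα.1.le
    _ ≤ C * (2 * ‖circ a - circ b‖ ^ α) := by
        gcongr
        exact two_mul_rpow_le hα (norm_nonneg _)
    _ = 2 * C * ‖circ a - circ b‖ ^ α := by ring

theorem norm_mul_norm_circ_arg_sub_le (z w : ℂ) :
    ‖w‖ * ‖circ z.arg - circ w.arg‖ ≤ 2 * ‖z - w‖ := by
  have hdecomp : ‖w‖ • (circ z.arg - circ w.arg) = (‖w‖ - ‖z‖) • circ z.arg + (z - w) := by
    have hz := norm_smul_circ_arg z
    have hw := norm_smul_circ_arg w
    rw [sub_smul, smul_sub, hz, hw]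
    abel
  calc ‖w‖ * ‖circ z.arg - circ w.arg‖ = ‖(‖w‖ - ‖z‖) • circ z.arg + (z - w)‖ := by
        rw [← hdecomp, norm_smul, norm_norm]
    _ ≤ |‖w‖ - ‖z‖| + ‖z - w‖ := by
        refine (norm_add_le _ _).trans_eq ?_
        rw [norm_smul, norm_circ, mul_one, Real.norm_eq_abs]
    _ ≤ 2 * ‖z - w‖ := by
        rw [abs_sub_comm]
        linarith [abs_norm_sub_norm_le z w]

theorem norm_smul_comp_arg_sub_le (hα : α ∈ Ioc (0 : ℝ) 1) {E : Type*} [NormedAddCommGroup E]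
    [NormedSpace ℝ E] {f : ℝ → E} {B C : ℝ} (hC : 0 ≤ C) (hB : ∀ θ, ‖f θ‖ ≤ B)
    (hf : ∀ a b, ‖f a - f b‖ ≤ C * ‖circ a - circ b‖ ^ α) {z w : ℂ} (hz : ‖z‖ ≤ 1)
    (hw : ‖w‖ ≤ 1) :
    ‖‖z‖ • f z.arg - ‖w‖ • f w.arg‖ ≤ 2 * (B + C) * ‖z - w‖ ^ α := by
  have hB0 : 0 ≤ B := (norm_nonneg _).trans (hB 0)
  have hradial : ‖z - w‖ ≤ 2 * ‖z - w‖ ^ α :=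
    le_mul_rpow_of_le hα (norm_nonneg _) one_le_two ((norm_sub_le z w).trans (by linarith))
  have hangular : ‖w‖ * ‖circ z.arg - circ w.arg‖ ^ α ≤ 2 * ‖z - w‖ ^ α := by
    calc ‖w‖ * ‖circ z.arg - circ w.arg‖ ^ α
        ≤ ‖w‖ ^ α * ‖circ z.arg - circ w.arg‖ ^ α := by
          gcongr
          simpa only [one_mul] using le_mul_rpow_of_le hα (norm_nonneg w) le_rfl hw
      _ = (‖w‖ * ‖circ z.arg - circ w.arg‖) ^ α :=
          (Real.mul_rpow (norm_nonneg _) (norm_nonneg _)).symm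
      _ ≤ (2 * ‖z - w‖) ^ α :=
          Real.rpow_le_rpow (by positivity) (norm_mul_norm_circ_arg_sub_le z w) hα.1.le
      _ ≤ 2 * ‖z - w‖ ^ α := two_mul_rpow_le hα (norm_nonneg _)
  calc ‖‖z‖ • f z.arg - ‖w‖ • f w.arg‖
      = ‖(‖z‖ - ‖w‖) • f z.arg + ‖w‖ • (f z.arg - f w.arg)‖ := by
        congr 1
        module
    _ ≤ |‖z‖ - ‖w‖| * ‖f z.arg‖ + ‖w‖ * ‖f z.arg - f w.arg‖ := by
        refine (norm_add_le _ _).trans_eq ?_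
        rw [norm_smul, norm_smul, norm_norm, Real.norm_eq_abs]
    _ ≤ ‖z - w‖ * B + ‖w‖ * (C * ‖circ z.arg - circ w.arg‖ ^ α) := by
        gcongr
        exacts [abs_norm_sub_norm_le z w, hB _, hf _ _]
    _ ≤ 2 * (B + C) * ‖z - w‖ ^ α := by
        linarith [mul_le_mul_of_nonneg_right hradial hB0, mul_le_mul_of_nonneg_left hangular hC]

end Holder

section PolarDerivative

/-- In polar coordinates `dθ = Im (dz / z)`; the logarithm of `y / z` avoids the branch cut. -/
theorem hasFDerivAt_comp_circ_arg {F : Type*} [NormedAddCommGroup F] [NormedSpace ℝ F]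
    {f : ℂ → F} {v : F} {z : ℂ} (hz : z ≠ 0)
    (hf : HasDerivAt (fun θ => f (circ θ)) v z.arg) :
    HasFDerivAt (fun y : ℂ => f (circ y.arg))
      ((Complex.imCLM.comp (ContinuousLinearMap.mul ℝ ℂ z⁻¹)).smulRight v) z := by
  have hlog : HasFDerivAt (fun y : ℂ => Complex.log (y / z))
      (ContinuousLinearMap.mul ℝ ℂ z⁻¹) z := by
    have hdiv : HasDerivAt (fun y : ℂ => y / z) z⁻¹ z := by
      simpa only [one_div] using (hasDerivAt_id' z).div_const z
    have hmem : z / z ∈ Complex.slitPlane := by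
      rw [div_self hz]
      exact Complex.one_mem_slitPlane
    refine ((hdiv.clog hmem).hasFDerivAt.restrictScalars ℝ).congr_fderiv ?_
    ext1 w
    simp [hz, mul_comm]
  have hangle : HasFDerivAt (fun y : ℂ => z.arg + (y / z).arg)
      (Complex.imCLM.comp (ContinuousLinearMap.mul ℝ ℂ z⁻¹)) z := by
    simpa only [Function.comp_def, Complex.imCLM_apply, Complex.log_im] using
      (Complex.imCLM.hasFDerivAt.comp z hlog).const_add z.arg
  have hf' : HasDerivAt (fun θ => f (circ θ)) v (z.arg + (z / z).arg) := by
    rwa [div_self hz, Complex.arg_one, add_zero]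
  refine ((hf'.hasFDerivAt.comp z hangle).congr_of_eventuallyEq ?_).congr_fderiv ?_
  · filter_upwards [isOpen_ne.mem_nhds hz] with y hy
    rw [Function.comp_apply, circ_arg_add_arg_div hy hz]
  · ext1 w
    simp

theorem hasFDerivAt_norm_pow_three (z : ℂ) :
    HasFDerivAt (fun y : ℂ => ‖y‖ ^ 3) ((3 * ‖z‖) • innerSL ℝ z) z := by
  have h := hasFDerivAt_norm_rpow z (p := 3) (by norm_num)
  norm_num at h
  exact_mod_cast h

end PolarDerivative

theorem mul_smul_add_mul_smul_eq_of_polar (r a : ℝ) (e p c : ℂ) :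
    r ^ 3 • c.im • a • (Complex.I * e) + (3 * r * (r ^ 2 * c.re)) • p =
      (r ^ 2 * a) • (r • e * c) +
        (2 * (r ^ 2 * c.re)) • (2⁻¹ : ℝ) • r • (3 * p + Complex.I * a • (Complex.I * e)) := by
  apply Complex.ext <;> simp [pow_succ] <;> ring

/-- `Φ` is an entropy in the unit ball of `C^{1,α}(S¹)` and `φ'` is its angular derivative. -/
structure NormalizedEntropy (α : ℝ) (Φ : ℂ → ℂ) (φ' : ℝ → ℂ) : Prop where
  hasDerivAt : ∀ θ : ℝ, HasDerivAt (fun t => Φ (circ t)) (φ' θ) θ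
  dotR_eq_zero : ∀ θ : ℝ, dotR (φ' θ) (circ θ) = 0
  norm_le_one : ∀ θ, ‖Φ (circ θ)‖ ≤ 1
  norm_deriv_le_one : ∀ θ, ‖φ' θ‖ ≤ 1
  norm_deriv_sub_le : ∀ θ₁ θ₂ : ℝ, ‖φ' θ₁ - φ' θ₂‖ ≤ |θ₁ - θ₂| ^ α
  continuous_deriv : Continuous φ'

theorem EntC1aBall.exists_normalizedEntropy {α : ℝ} {Φ : ℂ → ℂ} (h : EntC1aBall α Φ) :
    ∃ φ', NormalizedEntropy α Φ φ' := by
  obtain ⟨φ', ⟨hderiv, ⟨L, hL⟩, hdot⟩, hΦ, hφ', hholder⟩ := h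
  exact ⟨φ', hderiv, hdot, hΦ, hφ', hholder, hL.continuous⟩

/-- The extension of an entropy `Φ` from `S¹` to `ℂ` that is positively homogeneous of degree
three. -/
def entropyExt (Φ : ℂ → ℂ) (z : ℂ) : ℂ := ‖z‖ ^ 3 • Φ (circ z.arg)

/-- The angular part of `entropyField`. -/
def entropyProfile (Φ : ℂ → ℂ) (φ' : ℝ → ℂ) (θ : ℝ) : ℂ := 3 * Φ (circ θ) + Complex.I * φ' θ

/-- The field `Ψ`, positively homogeneous of degree one, for which the differential of
`entropyExt Φ` at `z` is `γ(z) id + 2 ⟨z, ·⟩ Ψ(z)`. -/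
def entropyField (Φ : ℂ → ℂ) (φ' : ℝ → ℂ) (z : ℂ) : ℂ :=
  (2⁻¹ : ℝ) • ‖z‖ • entropyProfile Φ φ' z.arg

theorem entropyExt_of_norm_eq_one (Φ : ℂ → ℂ) {z : ℂ} (hz : ‖z‖ = 1) :
    entropyExt Φ z = Φ z := by
  rw [entropyExt, circ_arg_of_norm_eq_one hz, hz, one_pow, one_smul]

namespace NormalizedEntropy

variable {α : ℝ} {Φ : ℂ → ℂ} {φ' : ℝ → ℂ} (h : NormalizedEntropy α Φ φ')
include h

theorem deriv_eq_of_circ_eq {a b : ℝ} (hab : circ a = circ b) : φ' a = φ' b := by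
  have hshift (c : ℝ) : HasDerivAt (fun t => Φ (circ (c + t))) (φ' c) 0 := by
    simpa only [add_zero] using (h.hasDerivAt (c + 0)).comp_const_add c 0
  have hfun : (fun t => Φ (circ (a + t))) = fun t => Φ (circ (b + t)) := by
    simp only [circ_add, hab]
  exact (hfun ▸ hshift a).unique (hshift b)

theorem norm_comp_circ_sub_le (a b : ℝ) : ‖Φ (circ a) - Φ (circ b)‖ ≤ |a - b| := by
  simpa only [one_mul, Real.norm_eq_abs] using
    convex_univ.norm_image_sub_le_of_norm_hasDerivWithin_le (f := fun t => Φ (circ t))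
      (fun θ _ => (h.hasDerivAt θ).hasDerivWithinAt) (fun θ _ => h.norm_deriv_le_one θ)
      (mem_univ b) (mem_univ a)

theorem norm_entropyProfile_le (θ : ℝ) : ‖entropyProfile Φ φ' θ‖ ≤ 4 := by
  calc ‖entropyProfile Φ φ' θ‖ ≤ 3 * ‖Φ (circ θ)‖ + ‖φ' θ‖ := by
        simpa [entropyProfile] using norm_add_le (3 * Φ (circ θ)) (Complex.I * φ' θ)
    _ ≤ 4 := by linarith [h.norm_le_one θ, h.norm_deriv_le_one θ]

theorem norm_entropyProfile_sub_le (hα : α ∈ Ioc (0 : ℝ) 1) (a b : ℝ) :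
    ‖entropyProfile Φ φ' a - entropyProfile Φ φ' b‖ ≤ 26 * ‖circ a - circ b‖ ^ α := by
  have hperiodic (a b : ℝ) (hab : circ a = circ b) :
      entropyProfile Φ φ' a = entropyProfile Φ φ' b := by
    rw [entropyProfile, entropyProfile, hab, h.deriv_eq_of_circ_eq hab]
  refine (norm_sub_le_norm_circ_sub_circ_rpow hα hperiodic (C := 13) (by norm_num)
    (fun a b hab => ?_) a b).trans_eq (by norm_num)
  have hlip : |a - b| ≤ 4 * |a - b| ^ α :=
    le_mul_rpow_of_le hα (abs_nonneg _) (by norm_num) (hab.trans Real.pi_le_four)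
  calc ‖entropyProfile Φ φ' a - entropyProfile Φ φ' b‖
      = ‖3 * (Φ (circ a) - Φ (circ b)) + Complex.I * (φ' a - φ' b)‖ := by
        rw [entropyProfile, entropyProfile]
        ring_nf
    _ ≤ 3 * ‖Φ (circ a) - Φ (circ b)‖ + ‖φ' a - φ' b‖ := by
        simpa using norm_add_le (3 * (Φ (circ a) - Φ (circ b))) (Complex.I * (φ' a - φ' b))
    _ ≤ 13 * |a - b| ^ α := by linarith [h.norm_comp_circ_sub_le a b, h.norm_deriv_sub_le a b]

theorem norm_entropyField_le (z : ℂ) : ‖entropyField Φ φ' z‖ ≤ 2 * ‖z‖ := by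
  rw [entropyField, norm_smul, norm_smul, norm_norm, Real.norm_of_nonneg (by norm_num)]
  nlinarith [h.norm_entropyProfile_le z.arg, norm_nonneg z]

theorem norm_entropyField_sub_le (hα : α ∈ Ioc (0 : ℝ) 1) {z w : ℂ} (hz : ‖z‖ ≤ 1)
    (hw : ‖w‖ ≤ 1) :
    ‖entropyField Φ φ' z - entropyField Φ φ' w‖ ≤ 30 * ‖z - w‖ ^ α := by
  have hle := norm_smul_comp_arg_sub_le hα (by norm_num) h.norm_entropyProfile_le
    (h.norm_entropyProfile_sub_le hα) hz hw
  rw [entropyField, entropyField, ← smul_sub, norm_smul, Real.norm_of_nonneg (by norm_num)]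
  linarith

theorem continuous_comp_circ : Continuous fun θ => Φ (circ θ) :=
  continuous_iff_continuousAt.2 fun θ => (h.hasDerivAt θ).continuousAt

theorem measurable_entropyField : Measurable (entropyField Φ φ') :=
  have hprofile : Continuous (entropyProfile Φ φ') :=
    (h.continuous_comp_circ.const_mul 3).add (h.continuous_deriv.const_mul Complex.I)
  (measurable_norm.smul (hprofile.measurable.comp Complex.measurable_arg)).fun_const_smul _

theorem norm_entropyExt_le (z : ℂ) : ‖entropyExt Φ z‖ ≤ ‖z‖ ^ 3 := by
  rw [entropyExt, norm_smul, norm_pow, norm_norm]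
  exact mul_le_of_le_one_right (by positivity) (h.norm_le_one _)

theorem exists_hasFDerivAt_entropyExt (z : ℂ) :
    ∃ γ : ℝ, |γ| ≤ ‖z‖ ^ 2 ∧ HasFDerivAt (entropyExt Φ)
      (γ • ContinuousLinearMap.id ℝ ℂ +
        ((2 : ℝ) • innerSL ℝ z).smulRight (entropyField Φ φ' z)) z := by
  rcases eq_or_ne z 0 with rfl | hz
  · have hO : entropyExt Φ =O[𝓝 0] fun x => ‖x - 0‖ ^ 3 :=
      .of_bound 1 (Eventually.of_forall fun x => by simpa using h.norm_entropyExt_le x)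
    refine ⟨0, by simp, (hO.hasFDerivAt (by norm_num)).congr_fderiv ?_⟩
    ext w
    simp
  obtain ⟨a, ha, ha_abs⟩ :=
    exists_eq_smul_I_mul_of_dotR_eq_zero (norm_circ z.arg) (h.dotR_eq_zero z.arg)
  refine ⟨‖z‖ ^ 2 * a, ?_, ((hasFDerivAt_norm_pow_three z).smul
    (hasFDerivAt_comp_circ_arg hz (h.hasDerivAt z.arg))).congr_fderiv ?_⟩
  · rw [abs_mul, ha_abs, abs_of_nonneg (sq_nonneg _)]
    exact mul_le_of_le_one_right (sq_nonneg _) (h.norm_deriv_le_one _)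
  ext1 w
  obtain ⟨c, rfl⟩ : ∃ c, w = z * c := ⟨z⁻¹ * w, (mul_inv_cancel_left₀ hz w).symm⟩
  have hinner : inner ℝ z (z * c) = ‖z‖ ^ 2 * c.re := by
    rw [Complex.inner, mul_right_comm, Complex.mul_conj, Complex.normSq_eq_norm_sq,
      Complex.re_ofReal_mul]
  have hpolar := mul_smul_add_mul_smul_eq_of_polar ‖z‖ a (circ z.arg) (Φ (circ z.arg)) c
  rw [norm_smul_circ_arg, ← ha] at hpolar
  simpa [hinner, hz, entropyField, entropyProfile, mul_assoc] using hpolar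

theorem continuous_entropyExt : Continuous (entropyExt Φ) :=
  continuous_iff_continuousAt.2 fun z =>
    have ⟨_, _, hderiv⟩ := h.exists_hasFDerivAt_entropyExt z
    hderiv.continuousAt

end NormalizedEntropy

/-! ### Mollification -/

section Mollification

theorem locallyIntegrable_of_norm_le {X F : Type*} [MeasurableSpace X] [TopologicalSpace X]
    {μ : Measure X} [IsLocallyFiniteMeasure μ] [NormedAddCommGroup F] {f : X → F} {b : ℝ}
    (hf : AEStronglyMeasurable f μ) (hb : ∀ x, ‖f x‖ ≤ b) : LocallyIntegrable f μ :=
  (locallyIntegrable_const b).mono hf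
    (Eventually.of_forall fun x => (hb x).trans (le_abs_self _))

variable {E : Type*} [NormedAddCommGroup E] [NormedSpace ℝ E]

theorem tsupport_comp_inv_smul_subset {k : E → ℝ} {ε : ℝ} (hε : 0 < ε)
    (hk : tsupport k ⊆ closedBall 0 1) :
    tsupport (fun y => k (ε⁻¹ • y)) ⊆ closedBall 0 ε := by
  intro y hy
  have hy' := hk (tsupport_comp_subset_preimage k (f := fun y => ε⁻¹ • y) (by fun_prop) hy)
  rw [mem_closedBall_zero_iff, norm_smul, norm_inv, Real.norm_of_nonneg hε.le,
    inv_mul_le_iff₀ hε, mul_one] at hy'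
  rwa [mem_closedBall_zero_iff]

variable [MeasurableSpace E]

/-- A nonnegative smooth kernel `k` of integral one, concentrated at scale `ε`: it is supported in
`closedBall 0 ε`, and `k`, `ε Dk` are bounded by `B` over the measure of that ball. -/
structure SmoothKernel (μ : Measure E) (B ε : ℝ) (k : E → ℝ) : Prop where
  contDiff : ContDiff ℝ (⊤ : ℕ∞) k
  hasCompactSupport : HasCompactSupport k
  tsupport_subset : tsupport k ⊆ closedBall 0 ε
  nonneg : ∀ x, 0 ≤ k x
  integral_eq_one : ∫ x, k x ∂μ = 1
  le_div : ∀ x, k x ≤ B / μ.real (closedBall 0 ε)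
  norm_fderiv_le_div : ∀ x, ‖fderiv ℝ k x‖ ≤ B / ε / μ.real (closedBall 0 ε)

theorem SmoothKernel.sub_notMem_tsupport {μ : Measure E} {B ε : ℝ} {k : E → ℝ}
    (hk : SmoothKernel μ B ε k) {x y : E} (hy : y ∉ closedBall x ε) : x - y ∉ tsupport k := by
  intro hmem
  rw [mem_closedBall, dist_comm, dist_eq_norm] at hy
  exact hy (mem_closedBall_zero_iff.1 (hk.tsupport_subset hmem))

variable [FiniteDimensional ℝ E] [BorelSpace E] (μ : Measure E) [μ.IsAddHaarMeasure]

theorem SmoothKernel.rescale {B : ℝ} {k : E → ℝ} (hk : SmoothKernel μ B 1 k) {ε : ℝ}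
    (hε : 0 < ε) :
    SmoothKernel μ B ε fun y => (ε ^ Module.finrank ℝ E)⁻¹ * k (ε⁻¹ • y) := by
  have hball : μ.real (closedBall 0 ε) = ε ^ Module.finrank ℝ E * μ.real (closedBall 0 1) :=
    Measure.addHaar_real_closedBall' μ 0 hε.le
  have hderiv (x : E) : HasFDerivAt (fun y => (ε ^ Module.finrank ℝ E)⁻¹ * k (ε⁻¹ • y))
      ((ε ^ Module.finrank ℝ E)⁻¹ • ε⁻¹ • fderiv ℝ k (ε⁻¹ • x)) x := by
    have hcomp := ((hk.contDiff.differentiable (by simp) (ε⁻¹ • x)).hasFDerivAt.comp x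
      ((hasFDerivAt_id (𝕜 := ℝ) x).const_smul ε⁻¹)).const_mul (ε ^ Module.finrank ℝ E)⁻¹
    refine hcomp.congr_fderiv ?_
    ext w
    simp
  have hsupport := tsupport_comp_inv_smul_subset hε hk.tsupport_subset
  have hcs : HasCompactSupport fun y => k (ε⁻¹ • y) :=
    HasCompactSupport.of_support_subset_isCompact (isCompact_closedBall 0 ε)
      ((subset_tsupport _).trans hsupport)
  refine ⟨contDiff_const.mul (hk.contDiff.comp (contDiff_const_smul _)), hcs.mul_left,
    (tsupport_mul_subset_right).trans hsupport, fun x => ?_, ?_, fun x => ?_, fun x => ?_⟩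
  · have := hk.nonneg (ε⁻¹ • x)
    positivity
  · rw [integral_const_mul, Measure.integral_comp_inv_smul_of_nonneg μ k hε.le,
      hk.integral_eq_one, smul_eq_mul, mul_one, inv_mul_cancel₀ (by positivity)]
  · have := hk.le_div (ε⁻¹ • x)
    rw [hball, mul_comm (ε ^ _), ← div_div, inv_mul_eq_div]
    gcongr
  · have := hk.norm_fderiv_le_div (ε⁻¹ • x)
    rw [div_one] at this
    rw [(hderiv x).fderiv, norm_smul, norm_smul, norm_inv, norm_inv, norm_pow,
      Real.norm_of_nonneg hε.le, hball]
    calc (ε ^ Module.finrank ℝ E)⁻¹ * (ε⁻¹ * ‖fderiv ℝ k (ε⁻¹ • x)‖)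
        ≤ (ε ^ Module.finrank ℝ E)⁻¹ * (ε⁻¹ * (B / μ.real (closedBall 0 1))) := by gcongr
      _ = B / ε / (ε ^ Module.finrank ℝ E * μ.real (closedBall 0 1)) := by ring

theorem exists_smoothKernel :
    ∃ B : ℝ, 1 ≤ B ∧ ∀ ε : ℝ, 0 < ε → ∃ k : E → ℝ, SmoothKernel μ B ε k := by
  let b : ContDiffBump (0 : E) := ⟨1 / 2, 1, by norm_num, by norm_num⟩
  have hsmooth : ContDiff ℝ (⊤ : ℕ∞) (b.normed μ) := b.contDiff_normed
  have hcs : HasCompactSupport (b.normed μ) := b.hasCompactSupport_normed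
  obtain ⟨B₀, hB₀⟩ := hcs.exists_bound_of_continuous hsmooth.continuous
  obtain ⟨B₁, hB₁⟩ :=
    (hcs.fderiv ℝ).exists_bound_of_continuous (hsmooth.continuous_fderiv (by simp))
  have hball : 0 < μ.real (closedBall (0 : E) 1) :=
    ENNReal.toReal_pos (measure_closedBall_pos μ 0 one_pos).ne' measure_closedBall_lt_top.ne
  set B := max 1 (max B₀ B₁ * μ.real (closedBall (0 : E) 1))
  have hB : max B₀ B₁ ≤ B / μ.real (closedBall (0 : E) 1) := by
    rw [le_div_iff₀ hball]
    exact le_max_right _ _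
  have hunit : SmoothKernel μ B 1 (b.normed μ) :=
    ⟨hsmooth, hcs, b.tsupport_normed_eq.subset, b.nonneg_normed, b.integral_normed,
      fun x => (le_abs_self _).trans ((hB₀ x).trans ((le_max_left _ _).trans hB)),
      fun x => by
        rw [div_one]
        exact (hB₁ x).trans ((le_max_right _ _).trans hB)⟩
  exact ⟨B, le_max_left _ _, fun ε hε => ⟨_, hunit.rescale μ hε⟩⟩

theorem norm_integral_le_mul_setIntegral_norm {X F G : Type*} [MeasurableSpace X]
    [NormedAddCommGroup F] [NormedAddCommGroup G] [NormedSpace ℝ G] {μ : Measure X} {s : Set X}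
    {f : X → F} {g : X → G} {c : ℝ} (hf : IntegrableOn f s μ) (hzero : ∀ x, x ∉ s → g x = 0)
    (hle : ∀ x, ‖g x‖ ≤ c * ‖f x‖) : ‖∫ x, g x ∂μ‖ ≤ c * ∫ x in s, ‖f x‖ ∂μ := by
  rw [← setIntegral_eq_integral_of_forall_compl_eq_zero hzero, ← integral_const_mul]
  exact norm_integral_le_of_norm_le (hf.norm.const_mul c) (Eventually.of_forall hle)

variable {μ} {F : Type*} [NormedAddCommGroup F] [NormedSpace ℝ F]

namespace SmoothKernel

variable {B ε : ℝ} {k : E → ℝ} (hk : SmoothKernel μ B ε k) {f : E → F}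
include hk

theorem integrable_smul (hf : LocallyIntegrable f μ) (x : E) :
    Integrable (fun t => k t • f (x - t)) μ :=
  hk.hasCompactSupport.convolutionExists_left (lsmul ℝ ℝ) hk.contDiff.continuous hf x

theorem contDiff_convolution (hf : LocallyIntegrable f μ) :
    ContDiff ℝ (⊤ : ℕ∞) (k ⋆[lsmul ℝ ℝ, μ] f) :=
  hk.hasCompactSupport.contDiff_convolution_left _ hk.contDiff hf

theorem hasFDerivAt_convolution (hf : LocallyIntegrable f μ) (x : E) :
    HasFDerivAt (k ⋆[lsmul ℝ ℝ, μ] f)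
      ((fderiv ℝ k ⋆[(lsmul ℝ ℝ).precompL E, μ] f) x) x :=
  hk.hasCompactSupport.hasFDerivAt_convolution_left _ (hk.contDiff.of_le (by simp)) hf x

theorem differentiable_convolution (hf : LocallyIntegrable f μ) :
    Differentiable ℝ (k ⋆[lsmul ℝ ℝ, μ] f) :=
  fun x => (hk.hasFDerivAt_convolution hf x).differentiableAt

theorem fderiv_convolution (hf : LocallyIntegrable f μ) (x : E) :
    fderiv ℝ (k ⋆[lsmul ℝ ℝ, μ] f) x = ∫ y, (fderiv ℝ k (x - y)).smulRight (f y) ∂μ := by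
  rw [(hk.hasFDerivAt_convolution hf x).fderiv, convolution_eq_swap]
  rfl

theorem integrable_fderiv_smulRight (hf : LocallyIntegrable f μ) (x : E) :
    Integrable (fun y => (fderiv ℝ k (x - y)).smulRight (f y)) μ :=
  ((hk.hasCompactSupport.fderiv ℝ).convolutionExists_left ((lsmul ℝ ℝ).precompL E)
    (hk.contDiff.continuous_fderiv (by simp)) hf x).integrable_swap

theorem norm_convolution_le_average (hf : LocallyIntegrable f μ) (x : E) :
    ‖(k ⋆[lsmul ℝ ℝ, μ] f) x‖ ≤ B * ⨍ y in closedBall x ε, ‖f y‖ ∂μ := by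
  rw [convolution_lsmul_swap, setAverage_eq, smul_eq_mul, ← mul_assoc, ← div_eq_mul_inv,
    Measure.addHaar_real_closedBall_center μ x]
  refine norm_integral_le_mul_setIntegral_norm
    (hf.integrableOn_isCompact (isCompact_closedBall x ε)) (fun y hy => ?_) (fun y => ?_)
  · rw [image_eq_zero_of_notMem_tsupport (hk.sub_notMem_tsupport hy), zero_smul]
  · rw [norm_smul, Real.norm_of_nonneg (hk.nonneg _)]
    gcongr
    exact hk.le_div _

theorem norm_fderiv_convolution_le_average (hf : LocallyIntegrable f μ) (x : E) :
    ‖fderiv ℝ (k ⋆[lsmul ℝ ℝ, μ] f) x‖ ≤ B / ε * ⨍ y in closedBall x ε, ‖f y‖ ∂μ := by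
  rw [hk.fderiv_convolution hf, setAverage_eq, smul_eq_mul, ← mul_assoc, ← div_eq_mul_inv,
    Measure.addHaar_real_closedBall_center μ x]
  refine norm_integral_le_mul_setIntegral_norm
    (hf.integrableOn_isCompact (isCompact_closedBall x ε)) (fun y hy => ?_) (fun y => ?_)
  · have hzero : fderiv ℝ k (x - y) = 0 :=
      image_eq_zero_of_notMem_tsupport fun hmem =>
        hk.sub_notMem_tsupport hy (tsupport_fderiv_subset ℝ hmem)
    rw [hzero, ContinuousLinearMap.zero_smulRight]
  · rw [ContinuousLinearMap.norm_smulRight_apply]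
    gcongr
    exact hk.norm_fderiv_le_div _

variable [CompleteSpace F]

theorem norm_convolution_le {b : ℝ} (hf : AEStronglyMeasurable f μ) (hb : ∀ x, ‖f x‖ ≤ b) (x : E) :
    ‖(k ⋆[lsmul ℝ ℝ, μ] f) x‖ ≤ b := by
  have hsupport : Function.support k ⊆ ball 0 (ε + 1) :=
    (subset_tsupport k).trans (hk.tsupport_subset.trans (closedBall_subset_ball (lt_add_one ε)))
  simpa only [dist_zero_right] using dist_convolution_le ((norm_nonneg _).trans (hb 0)) hsupport
    hk.nonneg hk.integral_eq_one hf (x₀ := x) (z₀ := 0) fun y _ => by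
      simpa only [dist_zero_right] using hb y

theorem convolution_sub_const (hf : LocallyIntegrable f μ) (c : F) :
    (k ⋆[lsmul ℝ ℝ, μ] fun y => f y - c) = fun x => (k ⋆[lsmul ℝ ℝ, μ] f) x - c := by
  ext x
  simp only [convolution_lsmul, smul_sub]
  rw [integral_sub (hk.integrable_smul hf x) (hk.integrable_smul (locallyIntegrable_const c) x),
    integral_smul_const, hk.integral_eq_one, one_smul]

theorem norm_convolution_sub_le_average (hf : LocallyIntegrable f μ) (x : E) (c : F) :
    ‖(k ⋆[lsmul ℝ ℝ, μ] f) x - c‖ ≤ B * ⨍ y in closedBall x ε, ‖f y - c‖ ∂μ := by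
  have hle := hk.norm_convolution_le_average (hf.sub (locallyIntegrable_const c)) x
  simp only [Pi.sub_def] at hle
  rwa [hk.convolution_sub_const hf c] at hle

theorem norm_fderiv_convolution_le_average_sub (hf : LocallyIntegrable f μ) (x : E) (c : F) :
    ‖fderiv ℝ (k ⋆[lsmul ℝ ℝ, μ] f) x‖ ≤ B / ε * ⨍ y in closedBall x ε, ‖f y - c‖ ∂μ := by
  have hle := hk.norm_fderiv_convolution_le_average (hf.sub (locallyIntegrable_const c)) x
  simp only [Pi.sub_def] at hle
  rwa [hk.convolution_sub_const hf c, fderiv_sub_const] at hle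

end SmoothKernel

theorem ae_tendsto_convolution [CompleteSpace F] {B : ℝ} {ε : ℕ → ℝ} {k : ℕ → E → ℝ}
    (hk : ∀ n, SmoothKernel μ B (ε n) (k n)) (hε : Tendsto ε atTop (𝓝[>] 0)) {f : E → F}
    (hf : LocallyIntegrable f μ) :
    ∀ᵐ x ∂μ, Tendsto (fun n => (k n ⋆[lsmul ℝ ℝ, μ] f) x) atTop (𝓝 (f x)) := by
  filter_upwards [IsUnifLocDoublingMeasure.ae_tendsto_average_norm_sub μ hf 1] with x hx
  have hmem : ∀ᶠ n in atTop, x ∈ closedBall x (1 * ε n) := by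
    filter_upwards [hε.eventually self_mem_nhdsWithin] with n hn
    exact mem_closedBall_self (by simpa using hn.le)
  have haverage := (hx (fun _ => x) ε hε hmem).const_mul B
  rw [mul_zero] at haverage
  exact tendsto_iff_norm_sub_tendsto_zero.2 (squeeze_zero (fun _ => norm_nonneg _)
    (fun n => (hk n).norm_convolution_sub_le_average hf x (f x)) haverage)

end Mollification

/-! ### Commutator estimate for mollified unit vector fields -/

theorem average_rpow_le_rpow_average {X : Type*} [MeasurableSpace X] {μ : Measure X}
    [IsFiniteMeasure μ] [NeZero μ] {f : X → ℝ} (hf_nonneg : ∀ x, 0 ≤ f x) {p q : ℝ} (hp : 0 < p)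
    (hpq : p ≤ q) (hfp : Integrable (fun x => f x ^ p) μ) (hfq : Integrable (fun x => f x ^ q) μ) :
    ⨍ x, f x ^ p ∂μ ≤ (⨍ x, f x ^ q ∂μ) ^ (p / q) := by
  have hq : 0 < q := hp.trans_le hpq
  have hpow : (fun x => (f x ^ p) ^ (q / p)) = fun x => f x ^ q := by
    ext x
    rw [← Real.rpow_mul (hf_nonneg x), mul_div_cancel₀ q hp.ne']
  have hjensen := (convexOn_rpow ((one_le_div hp).2 hpq)).map_average_le
    (Real.continuous_rpow_const (by positivity)).continuousOn isClosed_Ici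
    (Eventually.of_forall fun x => mem_Ici.2 (Real.rpow_nonneg (hf_nonneg x) p)) hfp
    (by rwa [Function.comp_def, hpow])
  have haverage_nonneg : 0 ≤ ⨍ x, f x ^ p ∂μ :=
    integral_nonneg fun x => Real.rpow_nonneg (hf_nonneg x) p
  rw [hpow] at hjensen
  calc ⨍ x, f x ^ p ∂μ = ((⨍ x, f x ^ p ∂μ) ^ (q / p)) ^ (p / q) := by
        rw [← Real.rpow_mul haverage_nonneg, div_mul_div_cancel₀ hp.ne', div_self hq.ne',
          Real.rpow_one]
    _ ≤ (⨍ x, f x ^ q ∂μ) ^ (p / q) := by gcongr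

theorem locallyIntegrable_norm_sub_rpow {X F : Type*} [TopologicalSpace X] [MeasurableSpace X]
    {μ : Measure X} [IsLocallyFiniteMeasure μ] [NormedAddCommGroup F] {f : X → F}
    (hf : AEStronglyMeasurable f μ) (hb : ∀ x, ‖f x‖ ≤ 1) (c : F) {p : ℝ} (hp : 0 ≤ p) :
    LocallyIntegrable (fun y => ‖f y - c‖ ^ p) μ := by
  have hmeas : AEStronglyMeasurable (fun y => ‖f y - c‖ ^ p) μ :=
    ((hf.sub aestronglyMeasurable_const).norm.aemeasurable.pow_const p).aestronglyMeasurable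
  refine locallyIntegrable_of_norm_le hmeas (b := (1 + ‖c‖) ^ p) fun y => ?_
  rw [Real.norm_of_nonneg (by positivity)]
  gcongr
  exact (norm_sub_le _ _).trans (by gcongr; exact hb y)

theorem setAverage_norm_sub_rpow_le {X F : Type*} [PseudoMetricSpace X] [ProperSpace X]
    [MeasurableSpace X] {μ : Measure X} [IsLocallyFiniteMeasure μ] [μ.IsOpenPosMeasure]
    [NormedAddCommGroup F] {f : X → F} {ε : ℝ}
    (hf : AEStronglyMeasurable f μ) (hb : ∀ x, ‖f x‖ ≤ 1) (hε : 0 < ε) (x : X) (c : F)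
    {p q : ℝ} (hp : 0 < p) (hpq : p ≤ q) :
    ⨍ y in closedBall x ε, ‖f y - c‖ ^ p ∂μ ≤
      (⨍ y in closedBall x ε, ‖f y - c‖ ^ q ∂μ) ^ (p / q) := by
  have hint {r : ℝ} (hr : 0 < r) : IntegrableOn (fun y => ‖f y - c‖ ^ r) (closedBall x ε) μ :=
    (locallyIntegrable_norm_sub_rpow hf hb c hr.le).integrableOn_isCompact
      (isCompact_closedBall x ε)
  have : NeZero (μ.restrict (closedBall x ε)) :=
    ⟨Measure.restrict_eq_zero.not.2 (measure_closedBall_pos μ x hε).ne'⟩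
  have : IsFiniteMeasure (μ.restrict (closedBall x ε)) :=
    isFiniteMeasure_restrict.2 measure_closedBall_lt_top.ne
  exact average_rpow_le_rpow_average (fun y => norm_nonneg _) hp hpq (hint hp)
    (hint (hp.trans_le hpq))

theorem exists_forall_setAverage_norm_sub_rpow_le {X F : Type*} [PseudoMetricSpace X]
    [ProperSpace X] [MeasurableSpace X] {μ : Measure X} [IsLocallyFiniteMeasure μ]
    [μ.IsOpenPosMeasure] [NormedAddCommGroup F] {f : X → F} {ε : ℝ} (hf : AEStronglyMeasurable f μ)
    (hb : ∀ x, ‖f x‖ ≤ 1) (hε : 0 < ε) (x : X) (c : F) {q : ℝ} (hq : 0 < q) :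
    ∃ S : ℝ, 0 ≤ S ∧ S ^ q = ⨍ y in closedBall x ε, ‖f y - c‖ ^ q ∂μ ∧
      ∀ p, 0 < p → p ≤ q → ⨍ y in closedBall x ε, ‖f y - c‖ ^ p ∂μ ≤ S ^ p := by
  have hnonneg : 0 ≤ ⨍ y in closedBall x ε, ‖f y - c‖ ^ q ∂μ :=
    integral_nonneg fun y => by positivity
  refine ⟨(⨍ y in closedBall x ε, ‖f y - c‖ ^ q ∂μ) ^ (1 / q), by positivity, ?_,
    fun p hp hpq => ?_⟩
  · rw [← Real.rpow_mul hnonneg, one_div_mul_cancel hq.ne', Real.rpow_one]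
  · rw [← Real.rpow_mul hnonneg, one_div_mul_eq_div]
    exact setAverage_norm_sub_rpow_le hf hb hε x c hp hpq

theorem setAverage_norm_comp_sub_le {X F G : Type*} [PseudoMetricSpace X] [ProperSpace X]
    [MeasurableSpace X] {μ : Measure X} [IsLocallyFiniteMeasure μ] [NormedAddCommGroup F]
    [NormedAddCommGroup G] {f : X → F} {Ψ : F → G} {H α : ℝ}
    (hΨ : ∀ z w, ‖z‖ ≤ 1 → ‖w‖ ≤ 1 → ‖Ψ z - Ψ w‖ ≤ H * ‖z - w‖ ^ α) (hα : 0 ≤ α)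
    (hf : AEStronglyMeasurable f μ) (hb : ∀ x, ‖f x‖ ≤ 1) (x : X) (ε : ℝ) {c : F} (hc : ‖c‖ ≤ 1) :
    ⨍ y in closedBall x ε, ‖Ψ (f y) - Ψ c‖ ∂μ ≤
      H * ⨍ y in closedBall x ε, ‖f y - c‖ ^ α ∂μ := by
  have hint : IntegrableOn (fun y => ‖f y - c‖ ^ α) (closedBall x ε) μ :=
    (locallyIntegrable_norm_sub_rpow hf hb c hα).integrableOn_isCompact (isCompact_closedBall x ε)
  rw [setAverage_eq, setAverage_eq, smul_eq_mul, smul_eq_mul, mul_left_comm,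
    ← integral_const_mul H]
  refine mul_le_mul_of_nonneg_left (integral_mono_of_nonneg
    (Eventually.of_forall fun y => norm_nonneg _) (hint.const_mul H)
    (Eventually.of_forall fun y => hΨ _ _ (hb y) hc)) (by positivity)

/-- The amount by which the vector field `M` fails to have unit length. -/
def normDefect {E F : Type*} [Norm F] (M : E → F) (x : E) : ℝ := 1 - ‖M x‖ ^ 2

section Commutator

variable {E : Type*} [NormedAddCommGroup E] [NormedSpace ℝ E] [FiniteDimensional ℝ E]
  [MeasurableSpace E] [BorelSpace E] {μ : Measure E} [μ.IsAddHaarMeasure]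
  {B ε : ℝ} {k : E → ℝ}

namespace SmoothKernel

variable {F : Type*} [NormedAddCommGroup F] [InnerProductSpace ℝ F] [CompleteSpace F] {f : E → F}
  (hk : SmoothKernel μ B ε k)
include hk

theorem convolution_norm_sub_sq (hf : AEStronglyMeasurable f μ) (hb : ∀ x, ‖f x‖ ≤ 1)
    (c : F) (x : E) :
    (k ⋆[lsmul ℝ ℝ, μ] fun y => ‖f y - c‖ ^ 2) x =
      (k ⋆[lsmul ℝ ℝ, μ] fun y => ‖f y‖ ^ 2) x - 2 * inner ℝ c ((k ⋆[lsmul ℝ ℝ, μ] f) x)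
        + ‖c‖ ^ 2 := by
  have hf_int := hk.integrable_smul (locallyIntegrable_of_norm_le hf hb) x
  have hsq := hk.integrable_smul (locallyIntegrable_norm_sub_rpow hf hb 0 zero_le_two) x
  have hc := hk.integrable_smul (locallyIntegrable_const (‖c‖ ^ 2)) x
  simp only [sub_zero, Real.rpow_two] at hsq
  have hexpand (t : E) : k t • ‖f (x - t) - c‖ ^ 2 =
      k t • ‖f (x - t)‖ ^ 2 - 2 * inner ℝ c (k t • f (x - t)) + k t • ‖c‖ ^ 2 := by
    rw [norm_sub_sq_real, inner_smul_right, real_inner_comm]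
    simp only [smul_eq_mul]
    ring
  simp only [convolution_lsmul, hexpand]
  have hinner := (hf_int.const_inner (𝕜 := ℝ) c).const_mul 2
  rw [integral_add (by exact hsq.sub hinner) hc, integral_sub hsq hinner, integral_const_mul,
    integral_inner hf_int, integral_smul_const, hk.integral_eq_one, one_smul]

theorem normDefect_convolution_eq (hf : AEStronglyMeasurable f μ) (hb : ∀ x, ‖f x‖ ≤ 1)
    (c : F) :
    normDefect (k ⋆[lsmul ℝ ℝ, μ] f) = fun x =>
      1 - (k ⋆[lsmul ℝ ℝ, μ] fun y => ‖f y‖ ^ 2) x + (k ⋆[lsmul ℝ ℝ, μ] fun y => ‖f y - c‖ ^ 2) x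
        - ‖(k ⋆[lsmul ℝ ℝ, μ] f) x - c‖ ^ 2 := by
  ext x
  rw [normDefect, hk.convolution_norm_sub_sq hf hb c x, norm_sub_sq_real, real_inner_comm]
  ring

theorem normDefect_convolution_nonneg (hf : AEStronglyMeasurable f μ) (hb : ∀ x, ‖f x‖ ≤ 1)
    (x : E) : 0 ≤ normDefect (k ⋆[lsmul ℝ ℝ, μ] f) x := by
  rw [normDefect, sub_nonneg]
  exact pow_le_one₀ (norm_nonneg _) (hk.norm_convolution_le hf hb x)

theorem normDefect_convolution_le (hf : AEStronglyMeasurable f μ) (hb : ∀ x, ‖f x‖ ≤ 1) {x : E}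
    (hunit : ∀ y ∈ closedBall x ε, ‖f y‖ = 1) (c : F) :
    normDefect (k ⋆[lsmul ℝ ℝ, μ] f) x ≤ B * ⨍ y in closedBall x ε, ‖f y - c‖ ^ (2 : ℝ) ∂μ := by
  have hsq := locallyIntegrable_norm_sub_rpow hf hb 0 zero_le_two
  have hdist := hk.norm_convolution_le_average
    (locallyIntegrable_norm_sub_rpow hf hb c zero_le_two) x
  simp only [Real.rpow_two, norm_pow, norm_norm, sub_zero] at hsq hdist ⊢
  have hone : ‖(k ⋆[lsmul ℝ ℝ, μ] fun y => ‖f y‖ ^ 2) x - 1‖ ≤ 0 := by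
    refine (hk.norm_convolution_sub_le_average hsq x 1).trans_eq ?_
    rw [setAverage_congr_fun isClosed_closedBall.measurableSet
      (Eventually.of_forall fun y hy => by rw [hunit y hy, one_pow, sub_self, norm_zero])]
    simp
  rw [norm_le_zero_iff, sub_eq_zero] at hone
  simp only [hk.normDefect_convolution_eq hf hb c, hone, sub_self, zero_add]
  exact (sub_le_self _ (sq_nonneg _)).trans ((le_abs_self _).trans hdist)

theorem norm_fderiv_normDefect_convolution_le (hf : AEStronglyMeasurable f μ)
    (hb : ∀ x, ‖f x‖ ≤ 1) {x : E} (hunit : ∀ y ∈ closedBall x ε, ‖f y‖ = 1) (c : F) :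
    ‖fderiv ℝ (normDefect (k ⋆[lsmul ℝ ℝ, μ] f)) x‖ ≤
      B / ε * ⨍ y in closedBall x ε, ‖f y - c‖ ^ (2 : ℝ) ∂μ +
        2 * (‖(k ⋆[lsmul ℝ ℝ, μ] f) x - c‖ * ‖fderiv ℝ (k ⋆[lsmul ℝ ℝ, μ] f) x‖) := by
  have hsq := locallyIntegrable_norm_sub_rpow hf hb 0 zero_le_two
  have hdist := locallyIntegrable_norm_sub_rpow hf hb c zero_le_two
  have hdist_le := hk.norm_fderiv_convolution_le_average hdist x
  simp only [Real.rpow_two, norm_pow, norm_norm, sub_zero] at hsq hdist hdist_le ⊢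
  have hone : ‖fderiv ℝ (k ⋆[lsmul ℝ ℝ, μ] fun y => ‖f y‖ ^ 2) x‖ ≤ 0 := by
    refine (hk.norm_fderiv_convolution_le_average_sub hsq x 1).trans_eq ?_
    rw [setAverage_congr_fun isClosed_closedBall.measurableSet
      (Eventually.of_forall fun y hy => by rw [hunit y hy, one_pow, sub_self, norm_zero])]
    simp
  rw [norm_le_zero_iff] at hone
  have hf_int := locallyIntegrable_of_norm_le hf hb
  have hderiv := (((hk.differentiable_convolution hsq x).hasFDerivAt.const_sub 1).add
    (hk.differentiable_convolution hdist x).hasFDerivAt).sub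
      ((hk.differentiable_convolution hf_int x).hasFDerivAt.sub_const c).norm_sq
  rw [hk.normDefect_convolution_eq hf hb c]
  rw [hone, neg_zero, zero_add] at hderiv
  refine (congrArg norm hderiv.fderiv).trans_le ((norm_sub_le _ _).trans (add_le_add hdist_le ?_))
  rw [two_smul, ← two_smul ℝ, norm_smul, Real.norm_of_nonneg zero_le_two]
  gcongr
  exact (ContinuousLinearMap.opNorm_comp_le _ _).trans_eq (by rw [innerSL_apply_norm])

variable {α S : ℝ} {x : E} {c : F}
  (hS : ∀ p, 0 < p → p ≤ 2 + α → ⨍ y in closedBall x ε, ‖f y - c‖ ^ p ∂μ ≤ S ^ p)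

include hS in
theorem norm_convolution_sub_le_of_average_rpow_le (hB : 0 ≤ B) (hα : 0 < α)
    (hf : LocallyIntegrable f μ) : ‖(k ⋆[lsmul ℝ ℝ, μ] f) x - c‖ ≤ B * S := by
  have h1 := hS 1 one_pos (by linarith)
  simp only [Real.rpow_one] at h1
  exact (hk.norm_convolution_sub_le_average hf x c).trans (by gcongr)

include hS in
theorem norm_fderiv_convolution_le_of_average_rpow_le (hB : 0 ≤ B) (hε : 0 < ε) (hα : 0 < α)
    (hf : LocallyIntegrable f μ) : ‖fderiv ℝ (k ⋆[lsmul ℝ ℝ, μ] f) x‖ ≤ B / ε * S := by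
  have h1 := hS 1 one_pos (by linarith)
  simp only [Real.rpow_one] at h1
  exact (hk.norm_fderiv_convolution_le_average_sub hf x c).trans (by gcongr)

include hS in
theorem norm_fderiv_normDefect_le_of_average_rpow_le (hB : 1 ≤ B) (hε : 0 < ε) (hα : 0 < α)
    (hf : AEStronglyMeasurable f μ) (hb : ∀ x, ‖f x‖ ≤ 1)
    (hunit : ∀ y ∈ closedBall x ε, ‖f y‖ = 1) (hS0 : 0 ≤ S) :
    ‖fderiv ℝ (normDefect (k ⋆[lsmul ℝ ℝ, μ] f)) x‖ ≤ 3 * B ^ 2 / ε * S ^ 2 := by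
  have hB0 : 0 ≤ B := by linarith
  have hf_int := locallyIntegrable_of_norm_le hf hb
  have h2 := hS 2 two_pos (by linarith)
  rw [Real.rpow_two] at h2
  calc ‖fderiv ℝ (normDefect (k ⋆[lsmul ℝ ℝ, μ] f)) x‖
      ≤ B / ε * S ^ 2 + 2 * (B * S * (B / ε * S)) := by
        refine (hk.norm_fderiv_normDefect_convolution_le hf hb hunit c).trans ?_
        gcongr
        · exact hk.norm_convolution_sub_le_of_average_rpow_le hS hB0 hα hf_int
        · exact hk.norm_fderiv_convolution_le_of_average_rpow_le hS hB0 hε hα hf_int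
    _ ≤ B ^ 2 / ε * S ^ 2 + 2 * (B * S * (B / ε * S)) := by
        gcongr
        exact le_self_pow₀ hB two_ne_zero
    _ = 3 * B ^ 2 / ε * S ^ 2 := by ring

variable {G : Type*} [NormedAddCommGroup G] [NormedSpace ℝ G] [CompleteSpace G] {Ψ : F → G}
  {H : ℝ} (hΨ : ∀ z w, ‖z‖ ≤ 1 → ‖w‖ ≤ 1 → ‖Ψ z - Ψ w‖ ≤ H * ‖z - w‖ ^ α)
include hΨ

include hS in
theorem norm_comp_convolution_sub_convolution_comp_le (hB : 1 ≤ B) (hα : α ∈ Ioc (0 : ℝ) 1)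
    (hf : AEStronglyMeasurable f μ) (hb : ∀ x, ‖f x‖ ≤ 1)
    (hΨf : LocallyIntegrable (fun y => Ψ (f y)) μ) (hc : ‖c‖ ≤ 1) (hH : 0 ≤ H) (hS0 : 0 ≤ S) :
    ‖Ψ ((k ⋆[lsmul ℝ ℝ, μ] f) x) - (k ⋆[lsmul ℝ ℝ, μ] fun y => Ψ (f y)) x‖ ≤
      2 * H * B * S ^ α := by
  have hB0 : 0 ≤ B := by linarith
  have hM : ‖Ψ ((k ⋆[lsmul ℝ ℝ, μ] f) x) - Ψ c‖ ≤ H * (B * S ^ α) := by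
    calc ‖Ψ ((k ⋆[lsmul ℝ ℝ, μ] f) x) - Ψ c‖
        ≤ H * ‖(k ⋆[lsmul ℝ ℝ, μ] f) x - c‖ ^ α :=
          hΨ _ _ (hk.norm_convolution_le hf hb x) hc
      _ ≤ H * (B * S) ^ α := by
          gcongr
          · exact hα.1.le
          · exact hk.norm_convolution_sub_le_of_average_rpow_le hS hB0 hα.1
              (locallyIntegrable_of_norm_le hf hb)
      _ ≤ H * (B * S ^ α) := by
          rw [Real.mul_rpow hB0 hS0]
          gcongr
          exact Real.rpow_le_self_of_one_le hB hα.2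
  have hP : ‖(k ⋆[lsmul ℝ ℝ, μ] fun y => Ψ (f y)) x - Ψ c‖ ≤ B * (H * S ^ α) := by
    refine (hk.norm_convolution_sub_le_average hΨf x (Ψ c)).trans ?_
    gcongr
    refine (setAverage_norm_comp_sub_le hΨ hα.1.le hf hb x ε hc).trans ?_
    gcongr
    exact hS α hα.1 (by linarith)
  rw [← sub_sub_sub_cancel_right _ _ (Ψ c)]
  calc _ ≤ H * (B * S ^ α) + B * (H * S ^ α) := (norm_sub_le _ _).trans (add_le_add hM hP)
    _ = 2 * H * B * S ^ α := by ring

omit [InnerProductSpace ℝ F] [CompleteSpace F] in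
include hS in
theorem norm_fderiv_convolution_comp_le (hB : 0 ≤ B) (hε : 0 < ε) (hα : 0 < α)
    (hf : AEStronglyMeasurable f μ) (hb : ∀ x, ‖f x‖ ≤ 1)
    (hΨf : LocallyIntegrable (fun y => Ψ (f y)) μ) (hc : ‖c‖ ≤ 1) (hH : 0 ≤ H) :
    ‖fderiv ℝ (k ⋆[lsmul ℝ ℝ, μ] fun y => Ψ (f y)) x‖ ≤ B / ε * (H * S ^ α) := by
  refine (hk.norm_fderiv_convolution_le_average_sub hΨf x (Ψ c)).trans ?_
  gcongr
  refine (setAverage_norm_comp_sub_le hΨ hα.le hf hb x ε hc).trans ?_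
  gcongr
  exact hS α hα (by linarith)

theorem norm_fderiv_normDefect_mul_norm_commutator_le (hB : 1 ≤ B) (hε : 0 < ε)
    (hα : α ∈ Ioc (0 : ℝ) 1) (hf : AEStronglyMeasurable f μ) (hb : ∀ x, ‖f x‖ ≤ 1)
    (hunit : ∀ y ∈ closedBall x ε, ‖f y‖ = 1) (hΨf : LocallyIntegrable (fun y => Ψ (f y)) μ)
    (hc : ‖c‖ ≤ 1) (hH : 0 ≤ H) :
    ‖fderiv ℝ (normDefect (k ⋆[lsmul ℝ ℝ, μ] f)) x‖ *
        ‖Ψ ((k ⋆[lsmul ℝ ℝ, μ] f) x) - (k ⋆[lsmul ℝ ℝ, μ] fun y => Ψ (f y)) x‖ ≤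
      6 * H * B ^ 3 / ε * ⨍ y in closedBall x ε, ‖f y - c‖ ^ (2 + α) ∂μ := by
  obtain ⟨S, hS0, hSq, hS⟩ := exists_forall_setAverage_norm_sub_rpow_le hf hb hε x c
    (q := 2 + α) (by linarith [hα.1])
  calc _ ≤ 3 * B ^ 2 / ε * S ^ 2 * (2 * H * B * S ^ α) := by
        gcongr
        · exact hk.norm_fderiv_normDefect_le_of_average_rpow_le hS hB hε hα.1 hf hb hunit hS0
        · exact hk.norm_comp_convolution_sub_convolution_comp_le hS hΨ hB hα hf hb hΨf hc hH hS0
    _ = 6 * H * B ^ 3 / ε * S ^ (2 + α) := by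
        rw [Real.rpow_add_of_nonneg hS0 zero_le_two hα.1.le, Real.rpow_two]
        ring
    _ = _ := by rw [hSq]

theorem normDefect_mul_norm_fderiv_convolution_comp_le (hB : 0 ≤ B) (hε : 0 < ε) (hα : 0 < α)
    (hf : AEStronglyMeasurable f μ) (hb : ∀ x, ‖f x‖ ≤ 1)
    (hunit : ∀ y ∈ closedBall x ε, ‖f y‖ = 1) (hΨf : LocallyIntegrable (fun y => Ψ (f y)) μ)
    (hc : ‖c‖ ≤ 1) (hH : 0 ≤ H) :
    normDefect (k ⋆[lsmul ℝ ℝ, μ] f) x * ‖fderiv ℝ (k ⋆[lsmul ℝ ℝ, μ] fun y => Ψ (f y)) x‖ ≤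
      H * B ^ 2 / ε * ⨍ y in closedBall x ε, ‖f y - c‖ ^ (2 + α) ∂μ := by
  obtain ⟨S, hS0, hSq, hS⟩ := exists_forall_setAverage_norm_sub_rpow_le hf hb hε x c
    (q := 2 + α) (by linarith)
  have hdefect : normDefect (k ⋆[lsmul ℝ ℝ, μ] f) x ≤ B * S ^ (2 : ℝ) := by
    refine (hk.normDefect_convolution_le hf hb hunit c).trans ?_
    gcongr
    exact hS 2 two_pos (by linarith)
  calc _ ≤ B * S ^ (2 : ℝ) * (B / ε * (H * S ^ α)) := by
        gcongr
        exact hk.norm_fderiv_convolution_comp_le hS hΨ hB hε hα hf hb hΨf hc hH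
    _ = H * B ^ 2 / ε * S ^ (2 + α) := by
        rw [Real.rpow_add_of_nonneg hS0 zero_le_two hα.le]
        ring
    _ = _ := by rw [hSq]

end SmoothKernel

end Commutator

/-! ### Divergence -/

section Divergence

variable {E : Type*} [NormedAddCommGroup E] [InnerProductSpace ℝ E] [FiniteDimensional ℝ E]

variable (E) in
/-- The trace, as a continuous linear functional on the endomorphisms of a finite-dimensional
space. -/
def traceCLM : (E →L[ℝ] E) →L[ℝ] ℝ :=
  LinearMap.toContinuousLinearMap (LinearMap.trace ℝ E ∘ₗ ContinuousLinearMap.coeLM ℝ)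

theorem traceCLM_apply (L : E →L[ℝ] E) : traceCLM E L = LinearMap.trace ℝ E L := rfl

theorem traceCLM_smulRight (ℓ : E →L[ℝ] ℝ) (v : E) : traceCLM E (ℓ.smulRight v) = ℓ v :=
  LinearMap.trace_smulRight (ℓ : E →ₗ[ℝ] ℝ) v

theorem abs_traceCLM_le (L : E →L[ℝ] E) : |traceCLM E L| ≤ Module.finrank ℝ E * ‖L‖ := by
  let b := stdOrthonormalBasis ℝ E
  rw [traceCLM_apply, LinearMap.trace_eq_sum_inner _ b]
  refine (Finset.abs_sum_le_sum_abs _ _).trans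
    ((Finset.sum_le_card_nsmul _ _ ‖L‖ fun i _ => ?_).trans_eq (by simp))
  calc |inner ℝ (b i) (L (b i))| ≤ ‖b i‖ * ‖L (b i)‖ := abs_real_inner_le_norm _ _
    _ ≤ ‖L‖ := by simpa using L.le_opNorm (b i)

/-- The divergence of a vector field. -/
def divergence (F : E → E) (x : E) : ℝ := traceCLM E (fderiv ℝ F x)

variable [MeasurableSpace E] [BorelSpace E] {μ : Measure E} {F : E → E} {ζ : E → ℝ}

theorem integrable_smul_fderiv [IsFiniteMeasureOnCompacts μ] (hζ : Continuous ζ)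
    (hcs : HasCompactSupport ζ) {C : ℝ} (hC : ∀ x ∈ tsupport ζ, ‖fderiv ℝ F x‖ ≤ C) :
    Integrable (fun x => ζ x • fderiv ℝ F x) μ := by
  refine ((hζ.integrable_of_hasCompactSupport hcs).abs.mul_const C).mono'
    (hζ.measurable.smul (measurable_fderiv ℝ F)).aestronglyMeasurable
    (Eventually.of_forall fun x => ?_)
  rw [norm_smul, Real.norm_eq_abs]
  by_cases hx : x ∈ tsupport ζ
  · gcongr
    exact hC x hx
  · simp [image_eq_zero_of_notMem_tsupport hx]

theorem integral_fderiv_apply_eq_neg_integral_mul_divergence [μ.IsAddHaarMeasure]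
    (hF : Differentiable ℝ F) (hζ : ContDiff ℝ 1 ζ) (hcs : HasCompactSupport ζ)
    (hint : Integrable (fun x => ζ x • fderiv ℝ F x) μ) :
    ∫ x, fderiv ℝ ζ x (F x) ∂μ = -∫ x, ζ x * divergence F x ∂μ := by
  let b := stdOrthonormalBasis ℝ E
  have hcoord (i) (x : E) : HasFDerivAt (fun x => inner ℝ (b i) (F x))
      ((innerSL ℝ (b i)).comp (fderiv ℝ F x)) x :=
    (innerSL ℝ (b i)).hasFDerivAt.comp x (hF x).hasFDerivAt
  have hleft (i) : Integrable (fun x => fderiv ℝ ζ x (b i) * inner ℝ (b i) (F x)) μ :=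
    (((hζ.continuous_fderiv one_ne_zero).clm_apply continuous_const).mul
      (continuous_const.inner hF.continuous)).integrable_of_hasCompactSupport
        ((hcs.fderiv_apply ℝ (b i)).mul_right)
  have hright (i) : Integrable (fun x => ζ x * inner ℝ (b i) (fderiv ℝ F x (b i))) μ := by
    simpa [inner_smul_right] using (hint.apply_continuousLinearMap (b i)).const_inner (𝕜 := ℝ) (b i)
  have hparts (i) : ∫ x, fderiv ℝ ζ x (b i) * inner ℝ (b i) (F x) ∂μ =
      -∫ x, ζ x * inner ℝ (b i) (fderiv ℝ F x (b i)) ∂μ := by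
    have h := integral_mul_fderiv_eq_neg_fderiv_mul_of_integrable (f := ζ)
      (g := fun x => inner ℝ (b i) (F x)) (v := b i) (μ := μ) (hleft i)
      (by simpa [(hcoord i _).fderiv] using hright i)
      ((hζ.continuous.mul (continuous_const.inner hF.continuous)).integrable_of_hasCompactSupport
        hcs.mul_right)
      (fun x _ => hζ.differentiable one_ne_zero x) (fun x _ => (hcoord i x).differentiableAt)
    rw [← neg_eq_iff_eq_neg, ← h]
    simp [(hcoord i _).fderiv]
  have hexpand (x : E) :
      fderiv ℝ ζ x (F x) = ∑ i, fderiv ℝ ζ x (b i) * inner ℝ (b i) (F x) := by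
    conv_lhs => rw [← b.sum_repr' (F x)]
    simp [mul_comm]
  simp only [hexpand, divergence, traceCLM_apply, LinearMap.trace_eq_sum_inner _ b,
    Finset.mul_sum, ContinuousLinearMap.coe_coe]
  rw [integral_finsetSum _ fun i _ => hleft i, integral_finsetSum _ fun i _ => hright i,
    ← Finset.sum_neg_distrib]
  exact Finset.sum_congr rfl fun i _ => hparts i

theorem abs_integral_fderiv_apply_le_of_abs_divergence_le [μ.IsAddHaarMeasure]
    (hF : Differentiable ℝ F) (hζ : ContDiff ℝ 1 ζ) (hcs : HasCompactSupport ζ)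
    (hint : Integrable (fun x => ζ x • fderiv ℝ F x) μ) {ρ : E → ℝ}
    (hρ : Integrable (fun x => |ζ x| * ρ x) μ)
    (hdiv : ∀ x ∈ tsupport ζ, |divergence F x| ≤ ρ x) :
    |∫ x, fderiv ℝ ζ x (F x) ∂μ| ≤ ∫ x, |ζ x| * ρ x ∂μ := by
  rw [integral_fderiv_apply_eq_neg_integral_mul_divergence hF hζ hcs hint, abs_neg,
    ← Real.norm_eq_abs]
  refine norm_integral_le_of_norm_le hρ (Eventually.of_forall fun x => ?_)
  rw [Real.norm_eq_abs, abs_mul]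
  by_cases hx : x ∈ tsupport ζ
  · gcongr
    exact hdiv x hx
  · simp [image_eq_zero_of_notMem_tsupport hx]

end Divergence

theorem fderiv_comp_const_sub {E F : Type*} [NormedAddCommGroup E] [NormedSpace ℝ E]
    [NormedAddCommGroup F] [NormedSpace ℝ F] (f : E → F) (x y : E) :
    fderiv ℝ (fun y => f (x - y)) y = -fderiv ℝ f (x - y) := by
  have hneg := (ContinuousLinearEquiv.neg ℝ (M := E)).comp_right_fderiv (f := fun z => f (x + z))
    (x := y)
  have hadd := fderiv_comp_add_left (𝕜 := ℝ) (f := f) (x := -y) x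
  rw [← sub_eq_add_neg] at hadd
  ext v
  simpa [Function.comp_def, hadd, ← sub_eq_add_neg] using DFunLike.congr_fun hneg v

theorem SmoothKernel.testFun_comp_const_sub {B ε : ℝ} {k : ℂ → ℝ} (hk : SmoothKernel volume B ε k)
    {Ω : Set ℂ} {x : ℂ} (hx : closedBall x ε ⊆ Ω) : TestFun Ω fun y => k (x - y) := by
  refine ⟨hk.contDiff.comp (contDiff_const.sub contDiff_id),
    hk.hasCompactSupport.comp_homeomorph (Homeomorph.subLeft x), fun y hy => hx ?_⟩
  by_contra hmem
  exact hk.sub_notMem_tsupport hmem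
    (tsupport_comp_subset_preimage k (f := fun y => x - y) (by fun_prop) hy)

theorem DivFree.divergence_convolution_eq_zero {Ω : Set ℂ} {m : ℂ → ℂ} (hdiv : DivFree Ω m)
    (hm : LocallyIntegrable m) {B ε : ℝ} {k : ℂ → ℝ} (hk : SmoothKernel volume B ε k) {x : ℂ}
    (hx : closedBall x ε ⊆ Ω) : divergence (k ⋆[lsmul ℝ ℝ] m) x = 0 := by
  have hzero := hdiv _ (hk.testFun_comp_const_sub hx)
  simp only [fderiv_comp_const_sub, neg_apply, integral_neg, neg_eq_zero]
    at hzero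
  rw [setIntegral_eq_integral_of_forall_compl_eq_zero fun y hy => ?_] at hzero
  · rw [divergence, hk.fderiv_convolution hm,
      ← (traceCLM ℂ).integral_comp_comm (hk.integrable_fderiv_smulRight hm x)]
    simpa only [traceCLM_smulRight] using hzero
  · rw [image_eq_zero_of_notMem_tsupport fun hmem => hk.sub_notMem_tsupport
      (fun hy' => hy (hx hy')) (tsupport_fderiv_subset ℝ hmem), zero_apply]

theorem hasFDerivAt_normDefect {E F : Type*} [NormedAddCommGroup E] [NormedSpace ℝ E]
    [NormedAddCommGroup F] [InnerProductSpace ℝ F] {M : E → F} {M' : E →L[ℝ] F} {x : E}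
    (hM : HasFDerivAt M M' x) :
    HasFDerivAt (normDefect M) (-((2 : ℝ) • (innerSL ℝ (M x)).comp M')) x := by
  refine (hM.norm_sq.const_sub 1).congr_fderiv ?_
  simp [two_smul]

/-- The field `Φ̃(M) + (1 - |M|²) P`, where `Φ̃` is the extension `entropyExt Φ`; it is used for `M`
a mollification of `m` and `P` the mollification of `Ψ(m)`, with `Ψ` the field `entropyField`. -/
def correctedEntropy (Φ M P : ℂ → ℂ) (x : ℂ) : ℂ := entropyExt Φ (M x) + normDefect M x • P x

theorem NormalizedEntropy.exists_hasFDerivAt_correctedEntropy {α : ℝ} {Φ : ℂ → ℂ} {φ' : ℝ → ℂ}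
    (h : NormalizedEntropy α Φ φ') {M P : ℂ → ℂ} {x : ℂ} (hM : DifferentiableAt ℝ M x)
    (hP : DifferentiableAt ℝ P x) :
    ∃ γ : ℝ, |γ| ≤ ‖M x‖ ^ 2 ∧ HasFDerivAt (correctedEntropy Φ M P)
      (γ • fderiv ℝ M x + normDefect M x • fderiv ℝ P x -
        (fderiv ℝ (normDefect M) x).smulRight (entropyField Φ φ' (M x) - P x)) x := by
  obtain ⟨γ, hγ, hΦ⟩ := h.exists_hasFDerivAt_entropyExt (M x)
  have hdefect := hasFDerivAt_normDefect hM.hasFDerivAt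
  refine ⟨γ, hγ, ((hΦ.comp x hM.hasFDerivAt).add
    (hdefect.smul hP.hasFDerivAt)).congr_fderiv ?_⟩
  rw [hdefect.fderiv]
  ext1 v
  simp only [add_apply, sub_apply, smul_apply, neg_apply, ContinuousLinearMap.comp_apply,
    ContinuousLinearMap.smulRight_apply, ContinuousLinearMap.id_apply]
  module

/-- The correction term turns the factor `Ψ(M)` of the differential of `Φ̃(M)` into the commutator
`Ψ(M) - P`. -/
theorem NormalizedEntropy.abs_divergence_correctedEntropy_le {α : ℝ} {Φ : ℂ → ℂ} {φ' : ℝ → ℂ}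
    (h : NormalizedEntropy α Φ φ') {M P : ℂ → ℂ} {x : ℂ} (hM : DifferentiableAt ℝ M x)
    (hP : DifferentiableAt ℝ P x) (hdiv : divergence M x = 0) :
    |divergence (correctedEntropy Φ M P) x| ≤
      ‖fderiv ℝ (normDefect M) x‖ * ‖entropyField Φ φ' (M x) - P x‖ +
        2 * (|normDefect M x| * ‖fderiv ℝ P x‖) := by
  obtain ⟨γ, -, hderiv⟩ := h.exists_hasFDerivAt_correctedEntropy hM hP
  rw [divergence] at hdiv
  have htrace : |traceCLM ℂ (fderiv ℝ P x)| ≤ 2 * ‖fderiv ℝ P x‖ := by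
    simpa using abs_traceCLM_le (fderiv ℝ P x)
  rw [divergence, hderiv.fderiv, map_sub, map_add, map_smul, map_smul, hdiv, smul_zero, zero_add,
    traceCLM_smulRight, smul_eq_mul, add_comm]
  refine (abs_sub _ _).trans
    (add_le_add ?_ (ContinuousLinearMap.le_opNorm (fderiv ℝ (normDefect M) x) _))
  rw [abs_mul, mul_left_comm]
  gcongr

theorem NormalizedEntropy.norm_fderiv_correctedEntropy_le {α : ℝ} {Φ : ℂ → ℂ} {φ' : ℝ → ℂ}
    (h : NormalizedEntropy α Φ φ') {M P : ℂ → ℂ} {x : ℂ} (hM : DifferentiableAt ℝ M x)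
    (hP : DifferentiableAt ℝ P x) (hM_le : ‖M x‖ ≤ 1) (hP_le : ‖P x‖ ≤ 2) :
    ‖fderiv ℝ (correctedEntropy Φ M P) x‖ ≤ 9 * ‖fderiv ℝ M x‖ + ‖fderiv ℝ P x‖ := by
  obtain ⟨γ, hγ, hderiv⟩ := h.exists_hasFDerivAt_correctedEntropy hM hP
  have hγ_le : |γ| ≤ 1 := hγ.trans (pow_le_one₀ (norm_nonneg _) hM_le)
  have hdefect : |normDefect M x| ≤ 1 := by
    rw [normDefect, abs_of_nonneg (sub_nonneg.2 (pow_le_one₀ (norm_nonneg _) hM_le))]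
    exact sub_le_self _ (sq_nonneg _)
  have hdefect' : ‖fderiv ℝ (normDefect M) x‖ ≤ 2 * ‖fderiv ℝ M x‖ := by
    rw [(hasFDerivAt_normDefect hM.hasFDerivAt).fderiv, norm_neg, norm_smul,
      Real.norm_of_nonneg zero_le_two]
    gcongr
    refine (ContinuousLinearMap.opNorm_comp_le _ _).trans ?_
    rw [innerSL_apply_norm]
    exact mul_le_of_le_one_left (norm_nonneg _) hM_le
  have hcommutator : ‖entropyField Φ φ' (M x) - P x‖ ≤ 4 :=
    (norm_sub_le _ _).trans (by linarith [h.norm_entropyField_le (M x)])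
  calc ‖fderiv ℝ (correctedEntropy Φ M P) x‖
      ≤ |γ| * ‖fderiv ℝ M x‖ + |normDefect M x| * ‖fderiv ℝ P x‖ +
          ‖fderiv ℝ (normDefect M) x‖ * ‖entropyField Φ φ' (M x) - P x‖ := by
        rw [hderiv.fderiv]
        refine (norm_sub_le _ _).trans (add_le_add ((norm_add_le _ _).trans_eq ?_)
          (ContinuousLinearMap.norm_smulRight_apply _ _).le)
        rw [norm_smul, norm_smul, Real.norm_eq_abs, Real.norm_eq_abs]
    _ ≤ 1 * ‖fderiv ℝ M x‖ + 1 * ‖fderiv ℝ P x‖ + 2 * ‖fderiv ℝ M x‖ * 4 := by gcongr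
    _ = 9 * ‖fderiv ℝ M x‖ + ‖fderiv ℝ P x‖ := by ring

/-! ### Increments of Besov functions -/

section Increments

/-- The function `x ↦ ε⁻¹ ⨍_{|h| ≤ ε} |m(x + h) - m(x)|^q dh`, where only the increments between
points of `Ω` are counted. -/
def incrementDensity (Ω : Set ℂ) (m : ℂ → ℂ) (q ε : ℝ) (x : ℂ) : ℝ≥0∞ :=
  (ENNReal.ofReal ε)⁻¹ * ⨍⁻ h in closedBall 0 ε,
    (Ω ∩ {y | y + h ∈ Ω}).indicator (fun y => ‖m (y + h) - m y‖ₑ ^ q) x ∂volume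

/-- The measure with density `incrementDensity Ω m q ε`. -/
def incrementMeasure (Ω : Set ℂ) (m : ℂ → ℂ) (q ε : ℝ) : Measure ℂ :=
  volume.withDensity (incrementDensity Ω m q ε)

variable {Ω : Set ℂ} {m : ℂ → ℂ} {q ε : ℝ}

theorem lintegral_enorm_sub_rpow_le_besovE (hq : 0 < q) (h : ℂ) :
    ∫⁻ x in Ω ∩ {x | x + h ∈ Ω}, ‖m (x + h) - m x‖ₑ ^ q ≤ ‖h‖ₑ * besovE Ω q (1 / q) m ^ q := by
  rcases eq_or_ne h 0 with rfl | h0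
  · simp [ENNReal.zero_rpow_of_pos hq]
  set J := ∫⁻ x in Ω ∩ {x | x + h ∈ Ω}, ‖m (x + h) - m x‖ₑ ^ q
  have hsup : ‖h‖ₑ ^ (-(1 / q)) * J ^ (1 / q) ≤ besovE Ω q (1 / q) m :=
    le_iSup (fun h : {h : ℂ // h ≠ 0} => (‖h.1‖₊ : ℝ≥0∞) ^ (-(1 / q)) *
      (∫⁻ x in Ω ∩ {x | x + h.1 ∈ Ω}, (‖m (x + h.1) - m x‖₊ : ℝ≥0∞) ^ q) ^ (1 / q)) ⟨h, h0⟩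
  have hpow := ENNReal.rpow_le_rpow hsup hq.le
  rw [ENNReal.mul_rpow_of_nonneg _ _ hq.le, ← ENNReal.rpow_mul, ← ENNReal.rpow_mul,
    neg_mul, one_div_mul_cancel hq.ne', ENNReal.rpow_one, ENNReal.rpow_neg_one] at hpow
  rwa [← ENNReal.inv_mul_le_iff (enorm_ne_zero.2 h0) enorm_ne_top]

theorem measurable_indicator_enorm_sub_rpow (hΩ : MeasurableSet Ω) (hm : Measurable m) (q : ℝ) :
    Measurable fun p : ℂ × ℂ =>
      (Ω ∩ {y | y + p.2 ∈ Ω}).indicator (fun y => ‖m (y + p.2) - m y‖ₑ ^ q) p.1 := by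
  have hsub : Measurable fun p : ℂ × ℂ => ‖m (p.1 + p.2) - m p.1‖ₑ ^ q :=
    ((hm.comp measurable_add).sub (hm.comp measurable_fst)).enorm.pow_const q
  exact hsub.indicator ((measurable_fst hΩ).inter (measurable_add hΩ))

theorem measurable_incrementDensity (hΩ : MeasurableSet Ω) (hm : Measurable m) :
    Measurable (incrementDensity Ω m q ε) :=
  Measurable.const_mul (by
    simp only [setLAverage_eq]
    exact (measurable_indicator_enorm_sub_rpow hΩ hm q).lintegral_prod_right'.div_const _) _

theorem incrementMeasure_univ_le (hΩ : MeasurableSet Ω) (hm : Measurable m) (hq : 0 < q)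
    (hε : 0 < ε) : incrementMeasure Ω m q ε univ ≤ besovE Ω q (1 / q) m ^ q := by
  have hmeas := measurable_indicator_enorm_sub_rpow hΩ hm q
  have hball : volume (closedBall (0 : ℂ) ε) ≠ 0 := (measure_closedBall_pos _ _ hε).ne'
  have hball' : volume (closedBall (0 : ℂ) ε) ≠ ⊤ := measure_closedBall_lt_top.ne
  have hε' : ENNReal.ofReal ε ≠ 0 := (ENNReal.ofReal_pos.2 hε).ne'
  simp only [incrementMeasure, withDensity_apply _ MeasurableSet.univ, Measure.restrict_univ,
    incrementDensity, setLAverage_eq, ENNReal.div_eq_inv_mul]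
  rw [lintegral_const_mul' _ _ (ENNReal.inv_ne_top.2 hε'),
    lintegral_const_mul' _ _ (ENNReal.inv_ne_top.2 hball),
    lintegral_lintegral_swap hmeas.aemeasurable, ENNReal.inv_mul_le_iff hε' ENNReal.ofReal_ne_top,
    ENNReal.inv_mul_le_iff hball hball', mul_comm, ← setLIntegral_const]
  refine setLIntegral_mono measurable_const fun h hh => ?_
  have hset : MeasurableSet (Ω ∩ {y | y + h ∈ Ω}) := hΩ.inter (measurable_add_const h hΩ)
  rw [lintegral_indicator hset]
  refine (lintegral_enorm_sub_rpow_le_besovE hq h).trans ?_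
  gcongr
  rw [← ofReal_norm]
  exact ENNReal.ofReal_le_ofReal (mem_closedBall_zero_iff.1 hh)

theorem toReal_incrementDensity (hm : Measurable m) (hq : 0 ≤ q) (hε : 0 < ε) {x : ℂ}
    (hx : closedBall x ε ⊆ Ω) :
    (incrementDensity Ω m q ε x).toReal =
      ε⁻¹ * ⨍ y in closedBall x ε, ‖m y - m x‖ ^ q := by
  have htranslate : ∫ y in closedBall x ε, ‖m y - m x‖ ^ q =
      ∫ h in closedBall 0 ε, ‖m (x + h) - m x‖ ^ q := by
    rw [← (measurePreserving_add_left volume x).setIntegral_preimage_emb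
      (measurableEmbedding_addLeft x), preimage_add_left_closedBall, neg_add_cancel]
  have hmeas : Measurable fun h => ‖m (x + h) - m x‖ ^ q :=
    ((hm.comp (measurable_const_add x)).sub_const _).norm.pow_const q
  have hinc (h : ℂ) (hh : h ∈ closedBall 0 ε) :
      (Ω ∩ {y | y + h ∈ Ω}).indicator (fun y => ‖m (y + h) - m y‖ₑ ^ q) x =
        ENNReal.ofReal (‖m (x + h) - m x‖ ^ q) := by
    rw [indicator_of_mem, ← ENNReal.ofReal_rpow_of_nonneg (norm_nonneg _) hq, ofReal_norm]
    exact ⟨hx (mem_closedBall_self hε.le), hx (by simpa using hh)⟩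
  rw [incrementDensity, setLAverage_eq,
    setLIntegral_congr_fun isClosed_closedBall.measurableSet hinc, setAverage_eq, htranslate,
    integral_eq_lintegral_of_nonneg_ae (Eventually.of_forall fun y => by positivity)
      hmeas.aestronglyMeasurable, ENNReal.toReal_mul, ENNReal.toReal_inv,
    ENNReal.toReal_div, ENNReal.toReal_ofReal hε.le, smul_eq_mul, div_eq_inv_mul,
    Measure.addHaar_real_closedBall_center volume x]
  rfl

theorem isFiniteMeasure_incrementMeasure (hΩ : MeasurableSet Ω) (hm : Measurable m) (hq : 0 < q)
    (hε : 0 < ε) (hbesov : besovE Ω q (1 / q) m < ⊤) :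
    IsFiniteMeasure (incrementMeasure Ω m q ε) :=
  ⟨(incrementMeasure_univ_le hΩ hm hq hε).trans_lt (ENNReal.rpow_lt_top_of_nonneg hq.le hbesov.ne)⟩

variable (hΩ : MeasurableSet Ω) (hm : Measurable m) [IsFiniteMeasure (incrementMeasure Ω m q ε)]
include hΩ hm

theorem ae_incrementDensity_lt_top : ∀ᵐ x, incrementDensity Ω m q ε x < ⊤ := by
  refine ae_lt_top (measurable_incrementDensity hΩ hm) ?_
  rw [← setLIntegral_univ, ← withDensity_apply _ MeasurableSet.univ]
  exact measure_ne_top (incrementMeasure Ω m q ε) univ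

theorem integrable_mul_toReal_incrementDensity {f : ℂ → ℝ}
    (hf : Integrable f (incrementMeasure Ω m q ε)) :
    Integrable fun x => f x * (incrementDensity Ω m q ε x).toReal := by
  simpa only [smul_eq_mul, mul_comm] using (integrable_withDensity_iff_integrable_smul'
    (measurable_incrementDensity hΩ hm) (ae_incrementDensity_lt_top hΩ hm)).1 hf

theorem integral_mul_toReal_incrementDensity (f : ℂ → ℝ) :
    ∫ x, f x * (incrementDensity Ω m q ε x).toReal = ∫ x, f x ∂incrementMeasure Ω m q ε := by
  rw [incrementMeasure, integral_withDensity_eq_integral_toReal_smul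
    (measurable_incrementDensity hΩ hm) (ae_incrementDensity_lt_top hΩ hm)]
  simp only [smul_eq_mul, mul_comm]

end Increments

/-! ### Entropy production of a mollified field -/

section MollifiedEntropy

/-- The approximation `Φ̃(m_k) + (1 - |m_k|²) (Ψ(m))_k` of `Φ(m)`, where the index `k` denotes
convolution with the kernel `k`, `Φ̃` is `entropyExt Φ` and `Ψ` is `entropyField Φ φ'`. -/
def mollifiedEntropy (Φ : ℂ → ℂ) (φ' : ℝ → ℂ) (k : ℂ → ℝ) (m : ℂ → ℂ) : ℂ → ℂ :=
  correctedEntropy Φ (k ⋆[lsmul ℝ ℝ] m) (k ⋆[lsmul ℝ ℝ] fun y => entropyField Φ φ' (m y))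

namespace NormalizedEntropy

variable {α B : ℝ} {Φ : ℂ → ℂ} {φ' : ℝ → ℂ} (h : NormalizedEntropy α Φ φ') {Ω : Set ℂ}
  {m : ℂ → ℂ}

section FixedScale

variable (hm : Measurable m) (hm_le : ∀ x, ‖m x‖ ≤ 1)
include h hm_le

theorem norm_entropyField_comp_le (x : ℂ) : ‖entropyField Φ φ' (m x)‖ ≤ 2 :=
  (h.norm_entropyField_le _).trans (by linarith [hm_le x])

include hm

theorem locallyIntegrable_entropyField_comp :
    LocallyIntegrable fun x => entropyField Φ φ' (m x) :=
  locallyIntegrable_of_norm_le (h.measurable_entropyField.comp hm).aestronglyMeasurable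
    (h.norm_entropyField_comp_le hm_le)

variable {ε : ℝ} {k : ℂ → ℝ} (hk : SmoothKernel volume B ε k)
include hk

theorem norm_convolution_entropyField_comp_le (x : ℂ) :
    ‖(k ⋆[lsmul ℝ ℝ] fun y => entropyField Φ φ' (m y)) x‖ ≤ 2 :=
  hk.norm_convolution_le (h.measurable_entropyField.comp hm).aestronglyMeasurable
    (h.norm_entropyField_comp_le hm_le) x

theorem norm_mollifiedEntropy_le (x : ℂ) : ‖mollifiedEntropy Φ φ' k m x‖ ≤ 3 := by
  have hM := hk.norm_convolution_le hm.aestronglyMeasurable hm_le x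
  have hP := h.norm_convolution_entropyField_comp_le hm hm_le hk x
  have hext := (h.norm_entropyExt_le _).trans (pow_le_one₀ (norm_nonneg _) hM)
  have hdefect_nonneg := hk.normDefect_convolution_nonneg hm.aestronglyMeasurable hm_le x
  have hdefect : normDefect (k ⋆[lsmul ℝ ℝ] m) x ≤ 1 := sub_le_self _ (sq_nonneg _)
  refine (norm_add_le _ _).trans ?_
  rw [norm_smul, Real.norm_of_nonneg hdefect_nonneg]
  nlinarith [norm_nonneg ((k ⋆[lsmul ℝ ℝ] fun y => entropyField Φ φ' (m y)) x)]

theorem differentiable_mollifiedEntropy : Differentiable ℝ (mollifiedEntropy Φ φ' k m) := fun x =>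
  have ⟨_, _, hderiv⟩ := h.exists_hasFDerivAt_correctedEntropy
    (hk.differentiable_convolution (locallyIntegrable_of_norm_le hm.aestronglyMeasurable hm_le) x)
    (hk.differentiable_convolution (h.locallyIntegrable_entropyField_comp hm hm_le) x)
  hderiv.differentiableAt

theorem exists_norm_fderiv_mollifiedEntropy_le {K : Set ℂ} (hK : IsCompact K) :
    ∃ C, ∀ x ∈ K, ‖fderiv ℝ (mollifiedEntropy Φ φ' k m) x‖ ≤ C := by
  have hM := hk.contDiff_convolution (locallyIntegrable_of_norm_le hm.aestronglyMeasurable hm_le)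
  have hP := hk.contDiff_convolution (h.locallyIntegrable_entropyField_comp hm hm_le)
  obtain ⟨C, hC⟩ := hK.bddAbove_image (((hM.continuous_fderiv (by simp)).norm.const_mul 9).add
    (hP.continuous_fderiv (by simp)).norm).continuousOn
  exact ⟨C, fun x hx => (h.norm_fderiv_correctedEntropy_le (hM.differentiable (by simp) x)
    (hP.differentiable (by simp) x) (hk.norm_convolution_le hm.aestronglyMeasurable hm_le x)
    (h.norm_convolution_entropyField_comp_le hm hm_le hk x)).trans (hC (mem_image_of_mem _ hx))⟩

variable (hα : α ∈ Ioc (0 : ℝ) 1) (hB : 1 ≤ B) (hε : 0 < ε)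
  (hunit : ∀ x ∈ Ω, ‖m x‖ = 1) (hdiv : DivFree Ω m)
include hα hB hε hunit hdiv

theorem abs_divergence_mollifiedEntropy_le {x : ℂ} (hx : closedBall x ε ⊆ Ω) :
    |divergence (mollifiedEntropy Φ φ' k m) x| ≤
      240 * B ^ 3 * (incrementDensity Ω m (2 + α) ε x).toReal := by
  have hm_int := locallyIntegrable_of_norm_le (μ := volume) hm.aestronglyMeasurable hm_le
  have hΨ_int := h.locallyIntegrable_entropyField_comp hm hm_le
  have hholder (z w : ℂ) (hz : ‖z‖ ≤ 1) (hw : ‖w‖ ≤ 1) := h.norm_entropyField_sub_le hα hz hw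
  have hunit_ball : ∀ y ∈ closedBall x ε, ‖m y‖ = 1 := fun y hy => hunit y (hx hy)
  have hcommutator := hk.norm_fderiv_normDefect_mul_norm_commutator_le hholder hB hε hα
    hm.aestronglyMeasurable hm_le hunit_ball hΨ_int (hm_le x) (by norm_num)
  have hcorrection := hk.normDefect_mul_norm_fderiv_convolution_comp_le hholder
    (zero_le_one.trans hB) hε hα.1 hm.aestronglyMeasurable hm_le hunit_ball hΨ_int (hm_le x)
    (by norm_num)
  have hdivergence := h.abs_divergence_correctedEntropy_le (hk.differentiable_convolution hm_int x)
    (hk.differentiable_convolution hΨ_int x) (hdiv.divergence_convolution_eq_zero hm_int hk hx)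
  rw [abs_of_nonneg (hk.normDefect_convolution_nonneg hm.aestronglyMeasurable hm_le x)]
    at hdivergence
  rw [toReal_incrementDensity hm (by linarith [hα.1]) hε hx]
  set A := ⨍ y in closedBall x ε, ‖m y - m x‖ ^ (2 + α)
  have hA : 0 ≤ A := integral_nonneg fun y => by positivity
  calc |divergence (mollifiedEntropy Φ φ' k m) x|
      ≤ 6 * 30 * B ^ 3 / ε * A + 2 * (30 * B ^ 2 / ε * A) :=
        hdivergence.trans (by gcongr)
    _ ≤ 6 * 30 * B ^ 3 / ε * A + 2 * (30 * B ^ 3 / ε * A) := by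
        gcongr
        exact Nat.le_succ 2
    _ = 240 * B ^ 3 * (ε⁻¹ * A) := by ring

theorem abs_integral_fderiv_mollifiedEntropy_le (hΩ : MeasurableSet Ω)
    [IsFiniteMeasure (incrementMeasure Ω m (2 + α) ε)] {ζ : ℂ → ℝ} (hζ : TestFun Ω ζ)
    (hsupp : ∀ x ∈ tsupport ζ, closedBall x ε ⊆ Ω) :
    |∫ x, fderiv ℝ ζ x (mollifiedEntropy Φ φ' k m x)| ≤
      240 * B ^ 3 * ∫ x, |ζ x| ∂incrementMeasure Ω m (2 + α) ε := by
  obtain ⟨C, hC⟩ := h.exists_norm_fderiv_mollifiedEntropy_le hm hm_le hk hζ.2.1.isCompact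
  have hint := (integrable_mul_toReal_incrementDensity hΩ hm
    (hζ.integrable (incrementMeasure Ω m (2 + α) ε)).abs).const_mul (240 * B ^ 3)
  simp only [mul_left_comm (240 * B ^ 3)] at hint
  refine (abs_integral_fderiv_apply_le_of_abs_divergence_le
    (h.differentiable_mollifiedEntropy hm hm_le hk) (hζ.1.of_le (by simp)) hζ.2.1
    (integrable_smul_fderiv hζ.continuous hζ.2.1 hC) hint
    fun x hx => h.abs_divergence_mollifiedEntropy_le hm hm_le hk hα hB hε hunit hdiv
      (hsupp x hx)).trans_eq ?_
  rw [← integral_mul_toReal_incrementDensity hΩ hm, ← integral_const_mul]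
  congr 1 with x
  ring

end FixedScale

section VanishingScale

include h

theorem ae_tendsto_mollifiedEntropy (hm : Measurable m) (hm_le : ∀ x, ‖m x‖ ≤ 1) {ε : ℕ → ℝ}
    {k : ℕ → ℂ → ℝ} (hk : ∀ n, SmoothKernel volume B (ε n) (k n))
    (hε : Tendsto ε atTop (𝓝[>] 0)) :
    ∀ᵐ x, ‖m x‖ = 1 →
      Tendsto (fun n => mollifiedEntropy Φ φ' (k n) m x) atTop (𝓝 (Φ (m x))) := by
  filter_upwards [ae_tendsto_convolution hk hε
      (locallyIntegrable_of_norm_le hm.aestronglyMeasurable hm_le),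
    ae_tendsto_convolution hk hε (h.locallyIntegrable_entropyField_comp hm hm_le)]
    with x hM hP hx
  have hdefect : Tendsto (fun n => normDefect (k n ⋆[lsmul ℝ ℝ] m) x) atTop (𝓝 0) := by
    simpa [normDefect, hx] using (hM.norm.pow 2).const_sub 1
  simpa [mollifiedEntropy, correctedEntropy, entropyExt_of_norm_eq_one Φ hx] using
    ((h.continuous_entropyExt.tendsto (m x)).comp hM).add (hdefect.smul hP)

theorem tendsto_integral_fderiv_mollifiedEntropy (hm : Measurable m) (hm_le : ∀ x, ‖m x‖ ≤ 1)
    (hunit : ∀ x ∈ Ω, ‖m x‖ = 1) {ε : ℕ → ℝ} {k : ℕ → ℂ → ℝ}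
    (hk : ∀ n, SmoothKernel volume B (ε n) (k n)) (hε : Tendsto ε atTop (𝓝[>] 0))
    {ζ : ℂ → ℝ} (hζ : TestFun Ω ζ) :
    Tendsto (fun n => ∫ x, fderiv ℝ ζ x (mollifiedEntropy Φ φ' (k n) m x)) atTop
      (𝓝 (∫ x in Ω, fderiv ℝ ζ x (Φ (m x)))) := by
  have hzero {x : ℂ} (hx : x ∉ Ω) : fderiv ℝ ζ x = 0 :=
    image_eq_zero_of_notMem_tsupport fun hmem => hx (hζ.2.2 (tsupport_fderiv_subset ℝ hmem))
  have hcont : Continuous (fderiv ℝ ζ) := hζ.1.continuous_fderiv (by simp)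
  rw [setIntegral_eq_integral_of_forall_compl_eq_zero fun x hx => by rw [hzero hx, zero_apply]]
  refine tendsto_integral_of_dominated_convergence (fun x => ‖fderiv ℝ ζ x‖ * 3)
    (fun n => (hcont.clm_apply
      (h.differentiable_mollifiedEntropy hm hm_le (hk n)).continuous).aestronglyMeasurable)
    ((hcont.integrable_of_hasCompactSupport (hζ.2.1.fderiv ℝ)).norm.mul_const 3)
    (fun n => Eventually.of_forall fun x => (fderiv ℝ ζ x).le_opNorm_of_le
      (h.norm_mollifiedEntropy_le hm hm_le (hk n) x)) ?_
  filter_upwards [h.ae_tendsto_mollifiedEntropy hm hm_le hk hε] with x hx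
  by_cases hxΩ : x ∈ Ω
  · exact ((fderiv ℝ ζ x).continuous.tendsto _).comp (hx (hunit x hxΩ))
  · simp [hzero hxΩ]

theorem abs_setIntegral_fderiv_comp_le_of_tendsto (hα : α ∈ Ioc (0 : ℝ) 1) (hB : 1 ≤ B)
    (hΩ : IsOpen Ω) (hm : Measurable m) (hm_le : ∀ x, ‖m x‖ ≤ 1) (hunit : ∀ x ∈ Ω, ‖m x‖ = 1)
    (hdiv : DivFree Ω m) (hbesov : besovE Ω (2 + α) (1 / (2 + α)) m < ⊤) {ε : ℕ → ℝ}
    {k : ℕ → ℂ → ℝ} (hk : ∀ n, SmoothKernel volume B (ε n) (k n))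
    (hε : Tendsto ε atTop (𝓝[>] 0)) {ζ : ℂ → ℝ} (hζ : TestFun Ω ζ) {l : Filter ℕ} [l.NeBot]
    (hl : l ≤ atTop) {I : ℝ}
    (hI : Tendsto (fun n => ∫ x, |ζ x| ∂incrementMeasure Ω m (2 + α) (ε n)) l (𝓝 I)) :
    |∫ x in Ω, fderiv ℝ ζ x (Φ (m x))| ≤ 240 * B ^ 3 * I := by
  obtain ⟨δ, hδ, hδΩ⟩ := hζ.2.1.isCompact.exists_cthickening_subset_open hΩ hζ.2.2
  have hlim := h.tendsto_integral_fderiv_mollifiedEntropy hm hm_le hunit hk hε hζ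
  refine le_of_tendsto_of_tendsto (hlim.mono_left hl).abs (hI.const_mul (240 * B ^ 3))
    (hl ?_)
  filter_upwards [hε.eventually (Ioo_mem_nhdsGT hδ)] with n ⟨hn_pos, hn_lt⟩
  have hfinite := isFiniteMeasure_incrementMeasure hΩ.measurableSet hm (by linarith [hα.1])
    hn_pos hbesov
  exact h.abs_integral_fderiv_mollifiedEntropy_le hm hm_le (hk n) hα hB hn_pos hunit hdiv
    hΩ.measurableSet hζ fun x hx => (closedBall_subset_closedBall hn_lt.le).trans
      ((closedBall_subset_cthickening hx δ).trans hδΩ)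

end VanishingScale

end NormalizedEntropy

end MollifiedEntropy

/-! ### Entropy production measures -/

section EntropyProduction

variable {α : ℝ} {Ω : Set ℂ} {m : ℂ → ℂ}

theorem exists_measurable_norm_eq_one_ae_eq {X E : Type*} [MeasurableSpace X]
    [NormedAddCommGroup E] [NormedSpace ℝ E] [Nontrivial E] [MeasurableSpace E] [BorelSpace E]
    {μ : Measure X} {f : X → E} (hf : AEStronglyMeasurable f μ) (hf_norm : ∀ᵐ x ∂μ, ‖f x‖ = 1) :
    ∃ g : X → E, Measurable g ∧ (∀ x, ‖g x‖ = 1) ∧ g =ᵐ[μ] f := by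
  classical
  obtain ⟨e, he⟩ := exists_norm_eq E zero_le_one
  have hmk : Measurable (hf.mk f) := hf.stronglyMeasurable_mk.measurable
  refine ⟨fun x => if ‖hf.mk f x‖ = 1 then hf.mk f x else e,
    Measurable.ite (hmk.norm (measurableSet_singleton 1)) hmk measurable_const, fun x => ?_, ?_⟩
  · dsimp only
    split_ifs with h
    exacts [h, he]
  · filter_upwards [hf.ae_eq_mk, hf_norm] with x hx hx_norm
    rw [if_pos (hx ▸ hx_norm), hx]

theorem besovE_congr_ae (hΩ : MeasurableSet Ω) (p s : ℝ) {m' : ℂ → ℂ}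
    (h : m' =ᵐ[volume.restrict Ω] m) : besovE Ω p s m' = besovE Ω p s m := by
  have hΩ_eq : ∀ᵐ x, x ∈ Ω → m' x = m x := (ae_restrict_iff' hΩ).1 h
  refine iSup_congr fun t => ?_
  have hshift_eq : ∀ᵐ x, x + t.1 ∈ Ω → m' (x + t.1) = m (x + t.1) :=
    (measurePreserving_add_right volume t.1).quasiMeasurePreserving.ae hΩ_eq
  congr 2
  refine setLIntegral_congr_fun_ae (hΩ.inter (hΩ.preimage (measurable_add_const t.1))) ?_
  filter_upwards [hΩ_eq, hshift_eq] with x hx hx_shift hxΩ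
  rw [hx hxΩ.1, hx_shift hxΩ.2]

theorem setIntegral_fderiv_comp_congr_ae {m' : ℂ → ℂ} (h : m' =ᵐ[volume.restrict Ω] m)
    (ζ : ℂ → ℝ) (Φ : ℂ → ℂ) :
    ∫ x in Ω, fderiv ℝ ζ x (Φ (m' x)) = ∫ x in Ω, fderiv ℝ ζ x (Φ (m x)) :=
  integral_congr_ae (h.mono fun x hx => by simp only [hx])

theorem exists_measure_abs_setIntegral_fderiv_comp_le (hα : α ∈ Ioc (0 : ℝ) 1) {B : ℝ}
    (hB : 1 ≤ B) (hker : ∀ ε > 0, ∃ k, SmoothKernel (volume : Measure ℂ) B ε k)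
    (hΩ : IsOpen Ω) (hm : Measurable m) (hm_norm : ∀ x, ‖m x‖ = 1) (hdiv : DivFree Ω m)
    (hbesov : besovE Ω (2 + α) (1 / (2 + α)) m < ⊤) :
    ∃ ν : Measure ℂ, ν univ ≤ besovE Ω (2 + α) (1 / (2 + α)) m ^ (2 + α) ∧
      ∀ Φ, EntC1aBall α Φ → ∀ ζ, TestFun Ω ζ →
        |∫ x in Ω, fderiv ℝ ζ x (Φ (m x))| ≤ 240 * B ^ 3 * ∫ x, |ζ x| ∂ν := by
  have hq : 0 < 2 + α := by linarith [hα.1]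
  have hε_pos (n : ℕ) : (0 : ℝ) < 1 / (n + 1) := by positivity
  have hε : Tendsto (fun n : ℕ => (1 : ℝ) / (n + 1)) atTop (𝓝[>] 0) :=
    tendsto_nhdsWithin_iff.2 ⟨tendsto_one_div_add_atTop_nhds_zero_nat,
      Eventually.of_forall hε_pos⟩
  choose k hk using fun n : ℕ => hker _ (hε_pos n)
  have hmass : besovE Ω (2 + α) (1 / (2 + α)) m ^ (2 + α) ≠ ⊤ :=
    ENNReal.rpow_ne_top_of_nonneg hq.le hbesov.ne
  obtain ⟨ν, hν, hlim⟩ := exists_measure_tendsto_integral (hyperfilter ℕ)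
    (μ := fun n : ℕ => incrementMeasure Ω m (2 + α) (1 / (n + 1)))
    (K := (besovE Ω (2 + α) (1 / (2 + α)) m ^ (2 + α)).toNNReal) fun n => by
      rw [ENNReal.coe_toNNReal hmass]
      exact incrementMeasure_univ_le hΩ.measurableSet hm hq (hε_pos n)
  rw [ENNReal.coe_toNNReal hmass] at hν
  refine ⟨ν, hν, fun Φ hΦ ζ hζ => ?_⟩
  obtain ⟨φ', h⟩ := hΦ.exists_normalizedEntropy
  exact h.abs_setIntegral_fderiv_comp_le_of_tendsto hα hB hΩ hm (fun x => (hm_norm x).le)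
    (fun x _ => hm_norm x) hdiv hbesov hk hε hζ Nat.hyperfilter_le_atTop
    (hlim ⟨⟨fun x => |ζ x|, hζ.continuous.abs⟩, hζ.2.1.comp_left abs_zero⟩)

theorem exists_measure_dominating_entropyProduction :
    ∃ C : ℝ, 0 < C ∧ ∀ {α : ℝ}, α ∈ Ioc (0 : ℝ) 1 → ∀ {Ω : Set ℂ}, IsOpen Ω → ∀ {m : ℂ → ℂ},
      AEStronglyMeasurable m (volume.restrict Ω) → (∀ᵐ x ∂volume.restrict Ω, ‖m x‖ = 1) →
      DivFree Ω m → besovE Ω (2 + α) (1 / (2 + α)) m < ⊤ →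
      ∃ ν : Measure ℂ,
        ν univ ≤ ENNReal.ofReal C * besovE Ω (2 + α) (1 / (2 + α)) m ^ (2 + α) ∧
        ∀ Φ, EntC1aBall α Φ → ∀ ζ, TestFun Ω ζ →
          |∫ x in Ω, fderiv ℝ ζ x (Φ (m x))| ≤ ∫ x, |ζ x| ∂ν := by
  obtain ⟨B, hB, hker⟩ := exists_smoothKernel (volume : Measure ℂ)
  have hC : 0 < 240 * B ^ 3 := by positivity
  refine ⟨240 * B ^ 3, hC, fun {α} hα {Ω} hΩ {m} hm hm_norm hdiv hbesov => ?_⟩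
  obtain ⟨m', hm', hm'_norm, hmm'⟩ := exists_measurable_norm_eq_one_ae_eq hm hm_norm
  have hdiv' : DivFree Ω m' := fun ζ hζ =>
    (setIntegral_fderiv_comp_congr_ae hmm' ζ id).trans (hdiv ζ hζ)
  have hbesov_eq := besovE_congr_ae hΩ.measurableSet (2 + α) (1 / (2 + α)) hmm'
  obtain ⟨ν, hν, hbound⟩ := exists_measure_abs_setIntegral_fderiv_comp_le hα hB hker hΩ hm'
    hm'_norm hdiv' (hbesov_eq ▸ hbesov)
  refine ⟨(240 * B ^ 3).toNNReal • ν, ?_, fun Φ hΦ ζ hζ => ?_⟩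
  · rw [hbesov_eq] at hν
    exact mul_le_mul_right hν _
  · rw [integral_smul_nnreal_measure, NNReal.smul_def, Real.coe_toNNReal _ hC.le, smul_eq_mul,
      ← setIntegral_fderiv_comp_congr_ae hmm']
    exact hbound Φ hΦ ζ hζ

theorem EntC1aBall.integrableOn_fderiv_comp {Φ : ℂ → ℂ} (hΦ : EntC1aBall α Φ)
    (hm : AEStronglyMeasurable m (volume.restrict Ω))
    (hm_norm : ∀ᵐ x ∂volume.restrict Ω, ‖m x‖ = 1) {ζ : ℂ → ℝ} (hζ : TestFun Ω ζ) :
    IntegrableOn (fun x => fderiv ℝ ζ x (Φ (m x))) Ω := by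
  obtain ⟨φ', h⟩ := hΦ.exists_normalizedEntropy
  have hcont : Continuous (fderiv ℝ ζ) := hζ.1.continuous_fderiv (by simp)
  have hint : Integrable (fderiv ℝ ζ) :=
    hcont.integrable_of_hasCompactSupport (hζ.2.1.fderiv ℝ)
  have hmeas : AEStronglyMeasurable (fun x => fderiv ℝ ζ x (entropyExt Φ (m x)))
      (volume.restrict Ω) :=
    isBoundedBilinearMap_apply.continuous.comp_aestronglyMeasurable
      (hcont.aestronglyMeasurable.prodMk (h.continuous_entropyExt.comp_aestronglyMeasurable hm))
  have hext : (fun x => fderiv ℝ ζ x (entropyExt Φ (m x))) =ᵐ[volume.restrict Ω]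
      fun x => fderiv ℝ ζ x (Φ (m x)) := by
    filter_upwards [hm_norm] with x hx
    rw [entropyExt_of_norm_eq_one Φ hx]
  refine Integrable.congr (hint.restrict.norm.mono' hmeas ?_) hext
  filter_upwards [hm_norm] with x hx
  exact (fderiv ℝ ζ x).le_of_opNorm_le_of_le le_rfl (h.norm_entropyExt_le (m x)) |>.trans_eq
    (by rw [hx]; ring)

/-- The distribution `div Φ(m)` on `Ω`, as a linear functional on test functions. -/
def divFunctional (Ω : Set ℂ) (m Φ : ℂ → ℂ)
    (hint : ∀ ζ, TestFun Ω ζ → IntegrableOn (fun x => fderiv ℝ ζ x (Φ (m x))) Ω) :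
    testFunSubmodule Ω →ₗ[ℝ] ℝ where
  toFun ζ := -∫ x in Ω, fderiv ℝ ζ.1 x (Φ (m x))
  map_add' ζ ξ := by
    have hadd (x : ℂ) : fderiv ℝ (ζ + ξ : testFunSubmodule Ω).1 x =
        fderiv ℝ ζ.1 x + fderiv ℝ ξ.1 x :=
      fderiv_add (ζ.2.1.differentiable (by simp) x) (ξ.2.1.differentiable (by simp) x)
    simp only [hadd, add_apply]
    rw [integral_add (hint ζ ζ.2) (hint ξ ξ.2), neg_add]
  map_smul' c ζ := by
    have hsmul (x : ℂ) : fderiv ℝ (c • ζ : testFunSubmodule Ω).1 x = c • fderiv ℝ ζ.1 x :=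
      fderiv_const_smul (ζ.2.1.differentiable (by simp) x) c
    simp only [hsmul, smul_apply]
    rw [integral_smul, RingHom.id_apply, smul_neg]

theorem exists_representsDiv {Φ : ℂ → ℂ}
    (hint : ∀ ζ, TestFun Ω ζ → IntegrableOn (fun x => fderiv ℝ ζ x (Φ (m x))) Ω)
    {ν : Measure ℂ} [IsFiniteMeasure ν]
    (hbound : ∀ ζ, TestFun Ω ζ → |∫ x in Ω, fderiv ℝ ζ x (Φ (m x))| ≤ ∫ x, |ζ x| ∂ν) :
    ∃ μ : SignedMeasure ℂ, RepresentsDiv Ω m Φ μ := by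
  obtain ⟨μ, hμ⟩ := exists_signedMeasure_eq_sInt ν (V := testFunSubmodule Ω)
    (fun ζ hζ => TestFun.continuous hζ |>.stronglyMeasurable)
    (fun ζ hζ => hζ.2.1.exists_bound_of_continuous (TestFun.continuous hζ))
    (divFunctional Ω m Φ hint) fun ζ => (abs_neg _).trans_le (hbound ζ ζ.2)
  exact ⟨μ, fun ζ hζ => hμ ⟨ζ, hζ⟩⟩

/-- The order on measures compares all measurable sets, so the bounds on subsets of `s` are
completed by a measure that is infinite on every nonempty subset of `sᶜ`. -/
theorem iSup_measure_apply_le {X ι : Type*} [MeasurableSpace X] {μ : ι → Measure X}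
    {ν : Measure X} {s : Set X} (hs : MeasurableSet s)
    (h : ∀ i A, MeasurableSet A → A ⊆ s → μ i A ≤ ν A) : (⨆ i, μ i) s ≤ ν s := by
  let τ : Measure X := ((⊤ : ℝ≥0∞) • Measure.count).restrict sᶜ
  have hle : ⨆ i, μ i ≤ ν + τ := iSup_le fun i => Measure.le_iff.2 fun A hA => by
    rw [Measure.add_apply]
    by_cases hAs : A ⊆ s
    · exact (h i A hA hAs).trans le_self_add
    · have hτ : τ A = ⊤ := by
        rw [Measure.restrict_apply hA, Measure.smul_apply, smul_eq_mul]
        exact ENNReal.top_mul (Measure.count_ne_zero (not_subset.1 hAs))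
      rw [hτ, add_top]
      exact le_top
  calc (⨆ i, μ i) s ≤ (ν + τ) s := hle s
    _ = ν s := by
      rw [Measure.add_apply, Measure.restrict_apply hs, inter_compl_self, measure_empty, add_zero]

theorem entVarC1a_apply_le (hΩ : IsOpen Ω) {ν : Measure ℂ} [IsFiniteMeasure ν]
    (hbound : ∀ Φ, EntC1aBall α Φ → ∀ ζ, TestFun Ω ζ →
      |∫ x in Ω, fderiv ℝ ζ x (Φ (m x))| ≤ ∫ x, |ζ x| ∂ν) :
    entVarC1a α Ω m Ω ≤ ν Ω := by
  rw [entVarC1a, iSup_sigma']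
  refine iSup_measure_apply_le hΩ.measurableSet fun ⟨Φ, μ⟩ A hA hAΩ =>
    totalVariation_le_of_abs_sInt_le hΩ (fun ζ hζ => ?_) hA hAΩ
  rw [← μ.2 ζ hζ, abs_neg]
  exact hbound Φ.1 Φ.2 ζ hζ

end EntropyProduction

theorem statement1_general :
    ∃ C : ℝ, 0 < C ∧
    ∀ α ∈ Ioc (0 : ℝ) 1, ∀ Ω : Set ℂ, IsOpen Ω →
    ∀ m : ℂ → ℂ, AEStronglyMeasurable m (volume.restrict Ω) →
      (∀ᵐ x ∂volume.restrict Ω, ‖m x‖ = 1) → DivFree Ω m →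
      besovE Ω (2 + α) (1 / (2 + α)) m < ⊤ →
      (∀ Φ : ℂ → ℂ, EntC1aBall α Φ → ∃ μ : SignedMeasure ℂ, RepresentsDiv Ω m Φ μ) ∧
      entVarC1a α Ω m Ω ≤ ENNReal.ofReal C * besovE Ω (2 + α) (1 / (2 + α)) m ^ (2 + α) := by
  obtain ⟨C, hC, hdom⟩ := exists_measure_dominating_entropyProduction
  refine ⟨C, hC, fun α hα Ω hΩ m hm hm_norm hdiv hbesov => ?_⟩
  obtain ⟨ν, hν, hbound⟩ := hdom hα hΩ hm hm_norm hdiv hbesov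
  have : IsFiniteMeasure ν := ⟨hν.trans_lt <| ENNReal.mul_lt_top ENNReal.ofReal_lt_top <|
    ENNReal.rpow_lt_top_of_nonneg (by linarith [hα.1]) hbesov.ne⟩
  exact ⟨fun Φ hΦ => exists_representsDiv
      (fun ζ hζ => hΦ.integrableOn_fderiv_comp hm hm_norm hζ) (hbound Φ hΦ),
    (entVarC1a_apply_le hΩ hbound).trans ((measure_mono (subset_univ Ω)).trans hν)⟩

theorem statement1 (α : ℝ) (hα : α ∈ Set.Ioo (0:ℝ) 1) :
    ∃ C : ℝ, 0 < C ∧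
    ∀ (Ω : Set ℂ), IsOpen Ω → IsBounded Ω →
    ∀ m : ℂ → ℂ, AEStronglyMeasurable m (volume.restrict Ω) →
      (∀ᵐ x ∂(volume.restrict Ω), ‖m x‖ = 1) → DivFree Ω m →
      besovE Ω (2+α) (1/(2+α)) m < ⊤ →
      (∀ Φ : ℂ → ℂ, EntC1aBall α Φ → ∃ μ : MeasureTheory.SignedMeasure ℂ, RepresentsDiv Ω m Φ μ) ∧
      entVarC1a α Ω m Ω ≤ ENNReal.ofReal C * besovNormE Ω (2+α) (1/(2+α)) m ^ (2+α) := by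
  obtain ⟨C, hC, hmain⟩ := statement1_general
  refine ⟨C, hC, fun Ω hΩ _ m hm hm_norm hdiv hbesov => ?_⟩
  obtain ⟨hrepr, hvar⟩ := hmain α ⟨hα.1, hα.2.le⟩ Ω hΩ m hm hm_norm hdiv hbesov
  exact ⟨hrepr, hvar.trans <| mul_le_mul_right
    (ENNReal.rpow_le_rpow le_add_self (by linarith [hα.1])) _⟩

end Eikonal
end
end

section
/- There is a universal constant C > 0 with the following property. Let Ω ⊂ ℝ² be open, m : Ω → S¹ measurable, ρ a mollifier as in the context, ε > 0, and x ∈ Ω with B_{2ε}(x) ⊂ Ω. Then the commutator w_ε = 1 − |m_ε|² satisfies |w_ε(x)| ≤ C ⨍_{B_ε} |D^h m(x)|² dh, and for every k ∈ ℝ² with |k| ≤ 1, |w_ε(x + εk) − w_ε(x)| ≤ C |k| ⨍_{B_{2ε}} |D^h m(x)|² dh. -/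
open MeasureTheory Metric Filter Set Bornology
open scoped ENNReal NNReal Topology Real

noncomputable section

namespace Eikonal

/-! ## STATEMENT 2 -/


/-!
For a weight `K` of total mass one and a unit vector field `f`, the variance identity
`1 - ‖∫ K f‖² = ∫ K ‖f - c‖² - ‖∫ K (f - c)‖²` holds for every constant vector `c`. Its right-hand
side is quadratic in `f - c`, so with `c = m x` a pointwise bound on `K` controls `w_ε`, and a
pointwise bound on `K - L` controls the difference of the commutators attached to two weights
`K` and `L`, the second term being handled by Jensen's inequality.

By rescaling, `m_ε (x + ε k)` is the average over `h ∈ B_{Nε}`, `N ≥ 1 + |k|`, of `m (x + h)` with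
weight `π N² ρ (k - h / ε)`. This weight is bounded and Lipschitz in `k`, uniformly in `ε`.
-/

open scoped ProbabilityTheory

section WeightedMeans

variable {α E : Type*} [MeasurableSpace α] {μ : Measure α} [NormedAddCommGroup E]
  {K L : α → ℝ} {f u : α → E} {M δ : ℝ}

lemma sq_integral_norm_le_integral_sq_norm [IsProbabilityMeasure μ] (hu : MemLp u 2 μ) :
    (∫ y, ‖u y‖ ∂μ) ^ 2 ≤ ∫ y, ‖u y‖ ^ 2 ∂μ :=
  even_two.convexOn_pow.map_integral_le (by fun_prop) isClosed_univ (by simp)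
    (hu.integrable one_le_two).norm (hu.integrable_norm_pow two_ne_zero)

lemma memLp_sub_const_of_norm_eq_one [IsFiniteMeasure μ] (hf : AEStronglyMeasurable f μ)
    (hf_norm : ∀ᵐ y ∂μ, ‖f y‖ = 1) (p : ℝ≥0∞) (c : E) : MemLp (fun y => f y - c) p μ :=
  (MemLp.of_bound hf 1 (hf_norm.mono fun _ hy => hy.le)).sub (memLp_const c)

section NormedSpace

variable [NormedSpace ℝ E]

lemma norm_integral_smul_le_mul_integral_norm (hK : ∀ᵐ y ∂μ, |K y| ≤ M) (hu : Integrable u μ) :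
    ‖∫ y, K y • u y ∂μ‖ ≤ M * ∫ y, ‖u y‖ ∂μ := by
  rw [← integral_const_mul]
  refine norm_integral_le_of_norm_le (hu.norm.const_mul M) (hK.mono fun y hy => ?_)
  rw [norm_smul, Real.norm_eq_abs]
  gcongr

lemma norm_integral_smul_sub_integral_smul_le (hKu : Integrable (fun y => K y • u y) μ)
    (hLu : Integrable (fun y => L y • u y) μ) (hu : Integrable u μ)
    (hKL : ∀ᵐ y ∂μ, |K y - L y| ≤ δ) :
    ‖∫ y, K y • u y ∂μ - ∫ y, L y • u y ∂μ‖ ≤ δ * ∫ y, ‖u y‖ ∂μ := by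
  simpa only [← integral_sub hKu hLu, ← sub_smul] using
    norm_integral_smul_le_mul_integral_norm hKL hu

lemma abs_sq_norm_integral_smul_sub_le [IsProbabilityMeasure μ] (hK : AEStronglyMeasurable K μ)
    (hL : AEStronglyMeasurable L μ) (hKM : ∀ᵐ y ∂μ, |K y| ≤ M) (hLM : ∀ᵐ y ∂μ, |L y| ≤ M)
    (hKL : ∀ᵐ y ∂μ, |K y - L y| ≤ δ) (hu : MemLp u 2 μ) :
    |‖∫ y, K y • u y ∂μ‖ ^ 2 - ‖∫ y, L y • u y ∂μ‖ ^ 2| ≤ 2 * M * δ * ∫ y, ‖u y‖ ^ 2 ∂μ := by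
  have hu₁ : Integrable u μ := hu.integrable one_le_two
  have hM : 0 ≤ M := hKM.exists.elim fun _ hy => (abs_nonneg _).trans hy
  have hδ : 0 ≤ δ := hKL.exists.elim fun _ hy => (abs_nonneg _).trans hy
  have hPR := norm_integral_smul_sub_integral_smul_le
    (hu₁.bdd_smul M hK hKM) (hu₁.bdd_smul M hL hLM) hu₁ hKL
  have hP := norm_integral_smul_le_mul_integral_norm hKM hu₁
  have hR := norm_integral_smul_le_mul_integral_norm hLM hu₁
  set P := ∫ y, K y • u y ∂μ
  set R := ∫ y, L y • u y ∂μ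
  set A := ∫ y, ‖u y‖ ∂μ
  calc |‖P‖ ^ 2 - ‖R‖ ^ 2| = (‖P‖ + ‖R‖) * |‖P‖ - ‖R‖| := by
        rw [sq_sub_sq, abs_mul, abs_of_nonneg (by positivity : 0 ≤ ‖P‖ + ‖R‖)]
    _ ≤ (M * A + M * A) * (δ * A) := by
        gcongr
        exact (abs_norm_sub_norm_le P R).trans hPR
    _ = 2 * M * δ * A ^ 2 := by ring
    _ ≤ 2 * M * δ * ∫ y, ‖u y‖ ^ 2 ∂μ := by
        gcongr
        exact sq_integral_norm_le_integral_sq_norm hu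

lemma norm_integral_smul_le_one (hK : Integrable K μ) (hK_nonneg : ∀ᵐ y ∂μ, 0 ≤ K y)
    (hK_one : ∫ y, K y ∂μ = 1) (hf_norm : ∀ᵐ y ∂μ, ‖f y‖ = 1) : ‖∫ y, K y • f y ∂μ‖ ≤ 1 := by
  rw [← hK_one]
  refine norm_integral_le_of_norm_le hK ?_
  filter_upwards [hK_nonneg, hf_norm] with y hKy hfy
  rw [norm_smul, hfy, mul_one, Real.norm_of_nonneg hKy]

lemma integral_smul_sub_const [CompleteSpace E] (hK : Integrable K μ)
    (hKf : Integrable (fun y => K y • f y) μ) (hK_one : ∫ y, K y ∂μ = 1) (c : E) :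
    ∫ y, K y • (f y - c) ∂μ = ∫ y, K y • f y ∂μ - c := by
  simp_rw [smul_sub]
  rw [integral_sub hKf (hK.smul_const c), integral_smul_const, hK_one, one_smul]

end NormedSpace

section InnerProductSpace

variable [InnerProductSpace ℝ E] [CompleteSpace E]

lemma integral_mul_sq_norm_sub_const (hK : Integrable K μ)
    (hKf : Integrable (fun y => K y • f y) μ) (hKf_sq : Integrable (fun y => K y * ‖f y‖ ^ 2) μ)
    (hK_one : ∫ y, K y ∂μ = 1) (c : E) :
    ∫ y, K y * ‖f y - c‖ ^ 2 ∂μ =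
      ∫ y, K y * ‖f y‖ ^ 2 ∂μ - 2 * inner ℝ c (∫ y, K y • f y ∂μ) + ‖c‖ ^ 2 := by
  have hexpand : ∀ y, K y * ‖f y - c‖ ^ 2 =
      K y * ‖f y‖ ^ 2 - 2 * inner ℝ c (K y • f y) + K y * ‖c‖ ^ 2 := fun y => by
    rw [norm_sub_sq_real, real_inner_smul_right, real_inner_comm]
    ring
  have hinner : Integrable (fun y => 2 * inner ℝ c (K y • f y)) μ :=
    (hKf.const_inner c).const_mul 2
  simp_rw [hexpand]
  rw [integral_add (by fun_prop) (hK.mul_const _), integral_sub hKf_sq hinner,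
    integral_const_mul, integral_inner hKf, integral_mul_const, hK_one, one_mul]

lemma one_sub_sq_norm_integral_smul (hK : Integrable K μ) (hK_one : ∫ y, K y ∂μ = 1)
    (hf : AEStronglyMeasurable f μ) (hf_norm : ∀ᵐ y ∂μ, ‖f y‖ = 1) (c : E) :
    1 - ‖∫ y, K y • f y ∂μ‖ ^ 2 =
      ∫ y, K y * ‖f y - c‖ ^ 2 ∂μ - ‖∫ y, K y • (f y - c) ∂μ‖ ^ 2 := by
  have hKf : Integrable (fun y => K y • f y) μ :=
    hK.smul_bdd 1 hf (hf_norm.mono fun _ hy => hy.le)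
  have hKf_sq : (fun y => K y * ‖f y‖ ^ 2) =ᵐ[μ] K := by
    filter_upwards [hf_norm] with y hy
    rw [hy, one_pow, mul_one]
  rw [integral_mul_sq_norm_sub_const hK hKf (hK.congr hKf_sq.symm) hK_one c,
    integral_congr_ae hKf_sq, hK_one, integral_smul_sub_const hK hKf hK_one c, norm_sub_sq_real,
    real_inner_comm]
  ring

lemma abs_one_sub_sq_norm_integral_smul_le [IsFiniteMeasure μ] (hK : AEStronglyMeasurable K μ)
    (hK_nonneg : ∀ᵐ y ∂μ, 0 ≤ K y) (hKM : ∀ᵐ y ∂μ, |K y| ≤ M) (hK_one : ∫ y, K y ∂μ = 1)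
    (hf : AEStronglyMeasurable f μ) (hf_norm : ∀ᵐ y ∂μ, ‖f y‖ = 1) (c : E) :
    |1 - ‖∫ y, K y • f y ∂μ‖ ^ 2| ≤ M * ∫ y, ‖f y - c‖ ^ 2 ∂μ := by
  have hK_int : Integrable K μ := .of_bound hK M hKM
  have hsq : Integrable (fun y => ‖f y - c‖ ^ 2) μ :=
    (memLp_sub_const_of_norm_eq_one hf hf_norm 2 c).integrable_norm_pow two_ne_zero
  have hnonneg : 0 ≤ 1 - ‖∫ y, K y • f y ∂μ‖ ^ 2 := sub_nonneg.2 <|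
    pow_le_one₀ (norm_nonneg _) (norm_integral_smul_le_one hK_int hK_nonneg hK_one hf_norm)
  calc |1 - ‖∫ y, K y • f y ∂μ‖ ^ 2|
      = ∫ y, K y * ‖f y - c‖ ^ 2 ∂μ - ‖∫ y, K y • (f y - c) ∂μ‖ ^ 2 := by
        rw [abs_of_nonneg hnonneg, one_sub_sq_norm_integral_smul hK_int hK_one hf hf_norm c]
    _ ≤ ‖∫ y, K y • ‖f y - c‖ ^ 2 ∂μ‖ :=
        (sub_le_self _ (sq_nonneg _)).trans (Real.le_norm_self _)
    _ ≤ M * ∫ y, ‖f y - c‖ ^ 2 ∂μ := by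
        simpa only [norm_pow, norm_norm] using
          norm_integral_smul_le_mul_integral_norm hKM hsq

lemma abs_one_sub_sq_norm_integral_smul_sub_le [IsProbabilityMeasure μ]
    (hK : AEStronglyMeasurable K μ) (hL : AEStronglyMeasurable L μ) (hKM : ∀ᵐ y ∂μ, |K y| ≤ M)
    (hLM : ∀ᵐ y ∂μ, |L y| ≤ M) (hKL : ∀ᵐ y ∂μ, |K y - L y| ≤ δ) (hK_one : ∫ y, K y ∂μ = 1)
    (hL_one : ∫ y, L y ∂μ = 1) (hf : AEStronglyMeasurable f μ) (hf_norm : ∀ᵐ y ∂μ, ‖f y‖ = 1)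
    (c : E) :
    |(1 - ‖∫ y, K y • f y ∂μ‖ ^ 2) - (1 - ‖∫ y, L y • f y ∂μ‖ ^ 2)| ≤
      (1 + 2 * M) * δ * ∫ y, ‖f y - c‖ ^ 2 ∂μ := by
  have hu : MemLp (fun y => f y - c) 2 μ := memLp_sub_const_of_norm_eq_one hf hf_norm 2 c
  have hsq : Integrable (fun y => ‖f y - c‖ ^ 2) μ := hu.integrable_norm_pow two_ne_zero
  have hquad : |∫ y, K y * ‖f y - c‖ ^ 2 ∂μ - ∫ y, L y * ‖f y - c‖ ^ 2 ∂μ| ≤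
      δ * ∫ y, ‖f y - c‖ ^ 2 ∂μ := by
    simpa only [smul_eq_mul, norm_pow, Real.norm_eq_abs, abs_norm] using
      norm_integral_smul_sub_integral_smul_le (hsq.bdd_smul M hK hKM) (hsq.bdd_smul M hL hLM)
        hsq hKL
  have hmean := abs_sq_norm_integral_smul_sub_le hK hL hKM hLM hKL hu
  rw [one_sub_sq_norm_integral_smul (.of_bound hK M hKM) hK_one hf hf_norm c,
    one_sub_sq_norm_integral_smul (.of_bound hL M hLM) hL_one hf hf_norm c, sub_sub_sub_comm]
  calc _ ≤ _ := (abs_sub _ _).trans (add_le_add hquad hmean)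
    _ = _ := by ring

end InnerProductSpace

end WeightedMeans

lemma setAverage_eq_integral_cond {α E : Type*} [MeasurableSpace α] [NormedAddCommGroup E]
    [NormedSpace ℝ E] (μ : Measure α) (s : Set α) (f : α → E) :
    ⨍ y in s, f y ∂μ = ∫ y, f y ∂μ[|s] :=
  setAverage_eq' μ f s

lemma quasiMeasurePreserving_add_left_cond_ball {E : Type*} [NormedAddCommGroup E]
    [MeasurableSpace E] [OpensMeasurableSpace E] [MeasurableAdd E] (μ : Measure E)
    [μ.IsAddLeftInvariant] (x : E) (r : ℝ) :
    Measure.QuasiMeasurePreserving (x + ·) μ[|ball 0 r] (μ.restrict (ball x r)) := by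
  have hpreserve := (measurePreserving_add_left μ x).restrict_preimage
    (measurableSet_ball : MeasurableSet (ball x r))
  rw [preimage_add_ball, sub_self] at hpreserve
  exact hpreserve.quasiMeasurePreserving.mono_left Measure.smul_absolutelyContinuous

lemma isProbabilityMeasure_cond_ball {E : Type*} [PseudoMetricSpace E] [ProperSpace E]
    [MeasurableSpace E] (μ : Measure E) [μ.IsOpenPosMeasure] [IsFiniteMeasureOnCompacts μ] (x : E)
    {r : ℝ} (hr : 0 < r) : IsProbabilityMeasure μ[|ball x r] :=
  ProbabilityTheory.cond_isProbabilityMeasure_of_finite (measure_ball_pos μ x hr).ne'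
    measure_ball_lt_top.ne

/-- The density, with respect to the uniform probability measure on the ball `B_{Nε}`, of the
weight `h ↦ ρ_ε (ε k - h)` which produces `m_ε (x + ε k)` from `h ↦ m (x + h)`. The volume
`π (N ε)²` of the ball absorbs the factor `ε⁻²` of `ρ_ε`. -/
def averagingKernel (ρ : ℂ → ℝ) (ε N : ℝ) (k h : ℂ) : ℝ := π * N ^ 2 * ρ (k - ε⁻¹ • h)

namespace Mollifier

variable {ρ : ℂ → ℝ} {ε N : ℝ} {k : ℂ}

lemma lipschitzWith (hρ : Mollifier ρ) : LipschitzWith 2 ρ :=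
  have ⟨hdiff, _, _, _, _, hgrad⟩ := hρ
  lipschitzWith_of_nnnorm_fderiv_le (𝕜 := ℝ) (hdiff.differentiable one_ne_zero) hgrad

lemma eq_zero_of_one_le_norm (hρ : Mollifier ρ) {a : ℂ} (ha : 1 ≤ ‖a‖) : ρ a = 0 :=
  have ⟨_, _, hsupp, _⟩ := hρ
  image_eq_zero_of_notMem_tsupport fun h => ha.not_gt (mem_ball_zero_iff.1 (hsupp h))

lemma abs_le_four (hρ : Mollifier ρ) (a : ℂ) : |ρ a| ≤ 4 := by
  obtain ha | ha := le_total 1 ‖a‖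
  · simp [hρ.eq_zero_of_one_le_norm ha]
  · calc |ρ a| = ‖ρ a - ρ 1‖ := by
          rw [hρ.eq_zero_of_one_le_norm norm_one.ge, sub_zero, Real.norm_eq_abs]
      _ ≤ 2 * ‖a - 1‖ := hρ.lipschitzWith.norm_sub_le a 1
      _ ≤ 2 * (1 + 1) := by
          gcongr
          exact (norm_sub_le _ _).trans (by rw [norm_one]; gcongr)
      _ = 4 := by norm_num

lemma continuous_averagingKernel (hρ : Mollifier ρ) : Continuous (averagingKernel ρ ε N k) := by
  have := hρ.lipschitzWith.continuous
  unfold averagingKernel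
  fun_prop

lemma averagingKernel_nonneg (hρ : Mollifier ρ) (h : ℂ) : 0 ≤ averagingKernel ρ ε N k h :=
  have ⟨_, _, _, hnonneg, _⟩ := hρ
  mul_nonneg (by positivity) (hnonneg _)

lemma abs_averagingKernel_le (hρ : Mollifier ρ) (h : ℂ) :
    |averagingKernel ρ ε N k h| ≤ π * N ^ 2 * 4 := by
  rw [averagingKernel, abs_mul, abs_of_nonneg (by positivity : 0 ≤ π * N ^ 2)]
  gcongr
  exact hρ.abs_le_four _

lemma abs_averagingKernel_sub_le (hρ : Mollifier ρ) (l h : ℂ) :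
    |averagingKernel ρ ε N k h - averagingKernel ρ ε N l h| ≤ π * N ^ 2 * (2 * ‖k - l‖) := by
  rw [averagingKernel, averagingKernel, ← mul_sub, abs_mul,
    abs_of_nonneg (by positivity : 0 ≤ π * N ^ 2)]
  gcongr
  simpa using hρ.lipschitzWith.norm_sub_le (k - ε⁻¹ • h) (l - ε⁻¹ • h)

lemma averagingKernel_eq_zero (hρ : Mollifier ρ) (hε : 0 < ε) (hN : 1 + ‖k‖ ≤ N) {h : ℂ}
    (hh : h ∉ ball 0 (N * ε)) : averagingKernel ρ ε N k h = 0 := by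
  have hscaled : N ≤ ‖ε⁻¹ • h‖ := by
    rw [mem_ball_zero_iff, not_lt] at hh
    rwa [norm_smul, Real.norm_of_nonneg (by positivity), inv_mul_eq_div, le_div_iff₀ hε]
  have hnorm : 1 ≤ ‖k - ε⁻¹ • h‖ := by
    linarith [norm_sub_norm_le (ε⁻¹ • h) k, norm_sub_rev (ε⁻¹ • h) k]
  rw [averagingKernel, hρ.eq_zero_of_one_le_norm hnorm, mul_zero]

lemma integral_averagingKernel_smul_cond_ball {E : Type*} [NormedAddCommGroup E] [NormedSpace ℝ E]
    (hρ : Mollifier ρ) (hε : 0 < ε) (hN : 1 + ‖k‖ ≤ N) (g : ℂ → E) :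
    ∫ h, averagingKernel ρ ε N k h • g h ∂volume[|ball 0 (N * ε)] =
      ∫ h, ((ε ^ 2)⁻¹ * ρ (k - ε⁻¹ • h)) • g h := by
  have hN_pos : 0 < N := by linarith [norm_nonneg k]
  have hvol : volume.real (ball (0 : ℂ) (N * ε)) = (N * ε) ^ 2 * π := by
    simp [measureReal_def, (mul_pos hN_pos hε).le]
  rw [← setAverage_eq_integral_cond, setAverage_eq,
    setIntegral_eq_integral_of_forall_compl_eq_zero fun h hh => by
      rw [hρ.averagingKernel_eq_zero hε hN hh, zero_smul], hvol, ← integral_smul]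
  congr with h
  rw [smul_smul, averagingKernel]
  congr 1
  field_simp

lemma integral_averagingKernel_cond_ball (hρ : Mollifier ρ) (hε : 0 < ε) (hN : 1 + ‖k‖ ≤ N) :
    ∫ h, averagingKernel ρ ε N k h ∂volume[|ball 0 (N * ε)] = 1 := by
  have ⟨_, _, _, _, hmass, _⟩ := hρ
  calc ∫ h, averagingKernel ρ ε N k h ∂volume[|ball 0 (N * ε)]
      = ∫ h, (ε ^ 2)⁻¹ * ρ (k - ε⁻¹ • h) := by
        simpa only [smul_eq_mul, mul_one] using
          hρ.integral_averagingKernel_smul_cond_ball hε hN fun _ => (1 : ℝ)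
    _ = (ε ^ 2)⁻¹ * (ε ^ 2 * ∫ y, ρ (k - y)) := by
        rw [integral_const_mul, Measure.integral_comp_inv_smul volume (fun y => ρ (k - y)),
          Complex.finrank_real_complex, smul_eq_mul, abs_of_nonneg (by positivity)]
    _ = 1 := by
        rw [inv_mul_cancel_left₀ (by positivity), integral_sub_left_eq_self, hmass]

lemma mollify_add_smul_eq_integral_cond_ball (hρ : Mollifier ρ) (hε : 0 < ε) (hN : 1 + ‖k‖ ≤ N)
    (m : ℂ → ℂ) (x : ℂ) :
    mollify ρ ε m (x + ε • k) =
      ∫ h, averagingKernel ρ ε N k h • m (x + h) ∂volume[|ball 0 (N * ε)] := by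
  rw [hρ.integral_averagingKernel_smul_cond_ball hε hN, mollify,
    ← integral_sub_left_eq_self _ _ (ε • k)]
  congr with h
  rw [smul_sub, inv_smul_smul₀ hε.ne', add_sub_assoc, sub_sub_cancel]

lemma mollify_eq_integral_cond_ball (hρ : Mollifier ρ) (hε : 0 < ε) (hN : 1 + ‖(0 : ℂ)‖ ≤ N)
    (m : ℂ → ℂ) (x : ℂ) :
    mollify ρ ε m x = ∫ h, averagingKernel ρ ε N 0 h • m (x + h) ∂volume[|ball 0 (N * ε)] := by
  simpa only [smul_zero, add_zero] using hρ.mollify_add_smul_eq_integral_cond_ball hε hN m x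

variable {m : ℂ → ℂ} {x : ℂ}

lemma abs_one_sub_sq_norm_mollify_le (hρ : Mollifier ρ) (hε : 0 < ε)
    (hm : AEStronglyMeasurable m (volume.restrict (ball x ε)))
    (hm_norm : ∀ᵐ y ∂volume.restrict (ball x ε), ‖m y‖ = 1) (c : ℂ) :
    |1 - ‖mollify ρ ε m x‖ ^ 2| ≤ 4 * π * ⨍ h in ball 0 ε, ‖m (x + h) - c‖ ^ 2 := by
  have hN : 1 + ‖(0 : ℂ)‖ ≤ 1 := by simp
  have htranslate := quasiMeasurePreserving_add_left_cond_ball volume x ε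
  have hmass := hρ.integral_averagingKernel_cond_ball hε hN
  rw [setAverage_eq_integral_cond, hρ.mollify_eq_integral_cond_ball hε hN]
  rw [one_mul] at hmass ⊢
  refine (abs_one_sub_sq_norm_integral_smul_le
    hρ.continuous_averagingKernel.aestronglyMeasurable (ae_of_all _ hρ.averagingKernel_nonneg)
    (ae_of_all _ hρ.abs_averagingKernel_le) hmass (hm.comp_quasiMeasurePreserving htranslate)
    (htranslate.ae hm_norm) c).trans_eq ?_
  simp only [Function.comp_apply]
  ring

lemma abs_one_sub_sq_norm_mollify_add_smul_sub_le (hρ : Mollifier ρ) (hε : 0 < ε)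
    (hm : AEStronglyMeasurable m (volume.restrict (ball x (2 * ε))))
    (hm_norm : ∀ᵐ y ∂volume.restrict (ball x (2 * ε)), ‖m y‖ = 1) (c : ℂ) (hk : ‖k‖ ≤ 1) :
    |(1 - ‖mollify ρ ε m (x + ε • k)‖ ^ 2) - (1 - ‖mollify ρ ε m x‖ ^ 2)| ≤
      8 * π * (1 + 32 * π) * ‖k‖ * ⨍ h in ball 0 (2 * ε), ‖m (x + h) - c‖ ^ 2 := by
  have hN : 1 + ‖k‖ ≤ 2 := by linarith
  have hN₀ : 1 + ‖(0 : ℂ)‖ ≤ 2 := by simp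
  have htranslate := quasiMeasurePreserving_add_left_cond_ball volume x (2 * ε)
  have := isProbabilityMeasure_cond_ball volume (0 : ℂ) (by positivity : 0 < 2 * ε)
  rw [setAverage_eq_integral_cond, hρ.mollify_add_smul_eq_integral_cond_ball hε hN,
    hρ.mollify_eq_integral_cond_ball hε hN₀]
  refine (abs_one_sub_sq_norm_integral_smul_sub_le
    hρ.continuous_averagingKernel.aestronglyMeasurable
    hρ.continuous_averagingKernel.aestronglyMeasurable
    (ae_of_all _ hρ.abs_averagingKernel_le) (ae_of_all _ hρ.abs_averagingKernel_le)
    (ae_of_all _ (hρ.abs_averagingKernel_sub_le 0)) (hρ.integral_averagingKernel_cond_ball hε hN)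
    (hρ.integral_averagingKernel_cond_ball hε hN₀) (hm.comp_quasiMeasurePreserving htranslate)
    (htranslate.ae hm_norm) c).trans_eq ?_
  simp only [Function.comp_apply, sub_zero]
  ring

end Mollifier

theorem statement2 :
    ∃ C : ℝ, 0 < C ∧
    ∀ (Ω : Set ℂ), IsOpen Ω →
    ∀ m : ℂ → ℂ, Measurable m → (∀ᵐ x ∂(volume.restrict Ω), ‖m x‖ = 1) →
    ∀ ρ : ℂ → ℝ, Mollifier ρ → ∀ ε : ℝ, 0 < ε →
    ∀ x : ℂ, Metric.ball x (2*ε) ⊆ Ω →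
      (|1 - ‖mollify ρ ε m x‖^2| ≤ C * ⨍ h in Metric.ball (0:ℂ) ε, ‖m (x+h) - m x‖^2) ∧
      ∀ k : ℂ, ‖k‖ ≤ 1 →
        |(1 - ‖mollify ρ ε m (x + ε • k)‖^2) - (1 - ‖mollify ρ ε m x‖^2)|
          ≤ C * ‖k‖ * ⨍ h in Metric.ball (0:ℂ) (2*ε), ‖m (x+h) - m x‖^2 := by
  refine ⟨8 * π * (1 + 32 * π), by positivity, ?_⟩
  intro Ω _ m hm hm_norm ρ hρ ε hε x hx
  have hball : ball x ε ⊆ Ω := (ball_subset_ball (by linarith)).trans hx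
  refine ⟨?_, fun k hk => hρ.abs_one_sub_sq_norm_mollify_add_smul_sub_le hε
    hm.aestronglyMeasurable (ae_restrict_of_ae_restrict_of_subset hx hm_norm) (m x) hk⟩
  have hC : 4 * π ≤ 8 * π * (1 + 32 * π) := by nlinarith [Real.pi_pos]
  refine (hρ.abs_one_sub_sq_norm_mollify_le hε hm.aestronglyMeasurable
    (ae_restrict_of_ae_restrict_of_subset hball hm_norm) (m x)).trans
    (mul_le_mul_of_nonneg_right hC (integral_nonneg fun _ => sq_nonneg _))

end Eikonal
end
end
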